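/- arXiv:1812.11370 — 10 statements merged into one kernel-verified Lean document; each statement's English description precedes it below -/
import Mathlib

section
/- Let a ∈ ℤ, M ≥ 0, and let f : ℕ_{a+1} → ℝ satisfy |f(k)| ≤ M for all k ∈ ℕ_{a+1}. Then for every real s with 0 < s < 2 the series F(s) = ∑_{k=1}^∞ (1-s)^{k-1} f(k+a) converges, and F(s) tends to f(a+1) as s tends to 1 (with s ranging over real numbers in (0,2), s ≠ 1). -/
/-!
The terms are dominated by the geometric series `M * |1 - s| ^ k`, which gives convergence for
`0 < s < 2`. On `[1/2, 3/2]` the domination by `(1/2) ^ k * M` is uniform in `s`, so the sum is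
continuous there; its value at `s = 1` is the `k = 0` term `f (a + 1)`.
-/

/-- initial value theorem for the nabla Laplace transform of a bounded
function `f : ℕ_{a+1} → ℝ`: for `0 < s < 2` the series
`F(s) = ∑_{k=1}^∞ (1-s)^{k-1} f(k+a)` converges, and `F(s) → f(a+1)` as `s → 1`
(with `s` ranging over `(0,2) \ {1}`). -/
theorem nabla_laplace_initial_value (a : ℤ) (M : ℝ) (hM : 0 ≤ M) (f : ℤ → ℝ)
    (hf : ∀ k : ℤ, a + 1 ≤ k → |f k| ≤ M) :
    (∀ s : ℝ, 0 < s → s < 2 →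
      Summable (fun k : ℕ => (1 - s) ^ k * f (a + 1 + k))) ∧
    Filter.Tendsto (fun s : ℝ => ∑' k : ℕ, (1 - s) ^ k * f (a + 1 + k))
      (nhdsWithin 1 (Set.Ioo (0 : ℝ) 2 \ {1})) (nhds (f (a + 1))) := by
  have hb : ∀ k : ℕ, |f (a + 1 + k)| ≤ M := fun k => hf _ (by omega)
  have hbound : ∀ (r s : ℝ) (k : ℕ), |1 - s| ≤ r →
      ‖(1 - s) ^ k * f (a + 1 + k)‖ ≤ r ^ k * M := by
    intro r s k hr
    rw [norm_mul, norm_pow, Real.norm_eq_abs, Real.norm_eq_abs]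
    have hr0 : 0 ≤ r := (abs_nonneg _).trans hr
    exact mul_le_mul (pow_le_pow_left₀ (abs_nonneg _) hr k) (hb k) (abs_nonneg _)
      (pow_nonneg hr0 k)
  constructor
  · intro s h0 h2
    have hs : |1 - s| < 1 := abs_lt.2 ⟨by linarith, by linarith⟩
    exact Summable.of_norm_bounded
      ((summable_geometric_of_lt_one (abs_nonneg _) hs).mul_right M)
      (fun k => hbound _ s k le_rfl)
  · have hcont : ContinuousOn (fun s : ℝ => ∑' k : ℕ, (1 - s) ^ k * f (a + 1 + k))
        (Set.Icc (1 / 2) (3 / 2)) := by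
      refine continuousOn_tsum (u := fun k => (1 / 2 : ℝ) ^ k * M) (fun k => by fun_prop)
        ((summable_geometric_of_lt_one (by norm_num) (by norm_num)).mul_right M) ?_
      intro k s hs
      exact hbound _ s k (abs_le.2 ⟨by linarith [hs.2], by linarith [hs.1]⟩)
    have hat := (hcont.continuousAt
      (Icc_mem_nhds (by norm_num : (1 / 2 : ℝ) < 1) (by norm_num))).tendsto
    have hval : ∑' k : ℕ, (1 - (1 : ℝ)) ^ k * f (a + 1 + k) = f (a + 1) := by
      rw [tsum_eq_single 0 (fun k hk => by simp [hk])]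
      simp
    rw [hval] at hat
    exact hat.mono_left nhdsWithin_le_nhds
end

section
/- Let a ∈ ℤ, L ∈ ℝ, and let f : ℕ_{a+1} → ℝ satisfy f(a+k) → L as k → ∞. Then for every real s with 0 < s < 1 the series F(s) = ∑_{k=1}^∞ (1-s)^{k-1} f(k+a) converges, and s·F(s) tends to L as s tends to 0 from the right (s ranging over (0,1)). -/
/-!
The kernel `s * (1 - s) ^ k` is nonnegative with total mass `1`, and each single weight tends to
`0` as `s → 0⁺`. Writing `f (a + 1 + k) = L + h k` with `h k → 0`, the constant part contributes
exactly `L`. If `|h k| ≤ ε` for `k ≥ N`, then the rest is at most `ε + s * ∑ k < N, |h k|`, by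
comparison with a geometric series plus a finitely supported one (`nabla_dominating_hasSum`,
`nabla_term_le`).
-/

/-- The dominating series: a geometric series plus the finitely many terms of index below `N`. -/
lemma nabla_dominating_hasSum (h : ℕ → ℝ) (N : ℕ) (ε s : ℝ) (hs0 : 0 < s) (hs1 : s < 1) :
    HasSum (fun k : ℕ => (1 - s) ^ k * ε + if k ∈ Finset.range N then |h k| else 0)
      (s⁻¹ * ε + ∑ k ∈ Finset.range N, |h k|) := by
  have h1 := (hasSum_geometric_of_lt_one (r := 1 - s) (by linarith) (by linarith)).mul_right ε
  rw [sub_sub_cancel] at h1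
  refine h1.add ?_
  have h2 : HasSum (fun k : ℕ => if k ∈ Finset.range N then |h k| else 0)
      (∑ k ∈ Finset.range N, if k ∈ Finset.range N then |h k| else 0) :=
    hasSum_sum_of_ne_finset_zero (fun k hk => if_neg hk)
  rwa [Finset.sum_congr rfl (fun k hk => if_pos hk)] at h2

lemma nabla_term_le (h : ℕ → ℝ) (N : ℕ) (ε s : ℝ) (hε : 0 ≤ ε) (hs0 : 0 < s) (hs1 : s < 1)
    (hN : ∀ k, N ≤ k → |h k| ≤ ε) (k : ℕ) :
    ‖(1 - s) ^ k * h k‖ ≤ (1 - s) ^ k * ε + if k ∈ Finset.range N then |h k| else 0 := by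
  have hp : 0 ≤ (1 - s) ^ k := pow_nonneg (by linarith) k
  have hp1 : (1 - s) ^ k ≤ 1 := pow_le_one₀ (by linarith) (by linarith)
  rw [Real.norm_eq_abs, abs_mul, abs_of_nonneg hp]
  split_ifs with hk
  · have := mul_le_mul_of_nonneg_right hp1 (abs_nonneg (h k))
    have := mul_nonneg hp hε
    linarith
  · have := mul_le_mul_of_nonneg_left (hN k (by simpa using hk)) hp
    linarith

/-- final value theorem for the nabla Laplace transform: if
`f(a+k) → L` as `k → ∞`, then for every `s ∈ (0,1)` the series
`F(s) = ∑_{k=1}^∞ (1-s)^{k-1} f(k+a)` converges, and `s·F(s) → L` as `s → 0⁺`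
(with `s` ranging over `(0,1)`). -/
theorem nabla_laplace_final_value (a : ℤ) (L : ℝ) (f : ℤ → ℝ)
    (hf : Filter.Tendsto (fun k : ℕ => f (a + k)) Filter.atTop (nhds L)) :
    (∀ s : ℝ, 0 < s → s < 1 →
      Summable (fun k : ℕ => (1 - s) ^ k * f (a + 1 + k))) ∧
    Filter.Tendsto (fun s : ℝ => s * ∑' k : ℕ, (1 - s) ^ k * f (a + 1 + k))
      (nhdsWithin 0 (Set.Ioo (0 : ℝ) 1)) (nhds L) := by
  obtain ⟨h, hh⟩ : ∃ h : ℕ → ℝ, ∀ k : ℕ, h k = f (a + 1 + k) - L := ⟨_, fun _ => rfl⟩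
  have hsmall : ∀ ε : ℝ, 0 < ε → ∃ N : ℕ, ∀ k, N ≤ k → |h k| ≤ ε := by
    intro ε hε
    obtain ⟨N, hN⟩ := Metric.tendsto_atTop.1 hf ε hε
    refine ⟨N, fun k hk => ?_⟩
    have := hN (k + 1) (by omega)
    rw [Real.dist_eq] at this
    rw [hh, show a + 1 + (k : ℤ) = a + ((k + 1 : ℕ) : ℤ) by push_cast; ring]
    exact this.le
  have hsplit : ∀ s : ℝ, (fun k : ℕ => (1 - s) ^ k * f (a + 1 + k)) =
      fun k : ℕ => (1 - s) ^ k * L + (1 - s) ^ k * h k := by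
    intro s
    funext k
    rw [hh]
    ring
  have hgeom : ∀ s : ℝ, 0 < s → s < 1 → HasSum (fun k : ℕ => (1 - s) ^ k * L) (s⁻¹ * L) := by
    intro s hs0 hs1
    have h1 := (hasSum_geometric_of_lt_one (r := 1 - s) (by linarith) (by linarith)).mul_right L
    rwa [sub_sub_cancel] at h1
  have hsum : ∀ s : ℝ, 0 < s → s < 1 → Summable (fun k : ℕ => (1 - s) ^ k * h k) := by
    intro s hs0 hs1
    obtain ⟨N, hN⟩ := hsmall 1 one_pos
    exact (nabla_dominating_hasSum h N 1 s hs0 hs1).summable.of_norm_bounded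
      (nabla_term_le h N 1 s zero_le_one hs0 hs1 hN)
  refine ⟨fun s hs0 hs1 => ?_, ?_⟩
  · rw [hsplit]
    exact (hgeom s hs0 hs1).summable.add (hsum s hs0 hs1)
  · rw [Metric.tendsto_nhdsWithin_nhds]
    intro ε hε
    obtain ⟨N, hN⟩ := hsmall (ε / 2) (half_pos hε)
    obtain ⟨C, hC⟩ : ∃ C : ℝ, C = ∑ k ∈ Finset.range N, |h k| := ⟨_, rfl⟩
    have hC0 : 0 ≤ C := hC ▸ Finset.sum_nonneg (fun _ _ => abs_nonneg _)
    -- `C + 1` rather than `C`, since `C` may vanish; then `s * C < ε / 2` below.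
    refine ⟨ε / 2 / (C + 1), by positivity, ?_⟩
    rintro s ⟨hs0, hs1⟩ hs
    rw [Real.dist_eq, sub_zero, abs_of_pos hs0, lt_div_iff₀ (by positivity)] at hs
    have hb := tsum_of_norm_bounded (nabla_dominating_hasSum h N (ε / 2) s hs0 hs1)
      (nabla_term_le h N (ε / 2) s (half_pos hε).le hs0 hs1 hN)
    rw [← hC, Real.norm_eq_abs] at hb
    rw [hsplit, (hgeom s hs0 hs1).summable.tsum_add (hsum s hs0 hs1), (hgeom s hs0 hs1).tsum_eq,
      mul_add, mul_inv_cancel_left₀ hs0.ne', Real.dist_eq, add_sub_cancel_left, abs_mul,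
      abs_of_pos hs0]
    have hm := mul_le_mul_of_nonneg_left hb hs0.le
    rw [mul_add, mul_inv_cancel_left₀ hs0.ne'] at hm
    linarith
end

section
/- Let a ∈ ℤ, α > 0, β > 0, let s be a real number with 0 < s ≤ 1, and let λ be a real number with |λ| < s^α. Then the nabla Laplace transform of the discrete Mittag–Leffler function satisfies ∑_{k=1}^∞ (1-s)^{k-1} F_{α,β}(λ, k+a, a) = s^{α-β}/(s^α - λ). -/
/-!
Put `γ_j = jα + β`. The coefficient `rise (k+1) (γ_j - 1) / Γ(γ_j)` equals
`Γ(γ_j + k) / (k! Γ(γ_j))`, the `k`-th coefficient of the binomial series of `(1 - x)^(-γ_j)`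
(`rise_div_Gamma`). At `x = 1 - s` that series sums to `s^(-γ_j)` (`hasSum_rise`). All its
coefficients are positive, so the double series in `(j, k)` converges absolutely, its sum of absolute
values being the geometric series `∑ s^(-β) (|λ| s^(-α))^j`. Swapping the order of summation
leaves `∑ s^(-β) (λ s^(-α))^j = s^(α-β) / (s^α - λ)`.
-/

/-- The rising function `p^{q̄} = Γ(p+q)/Γ(p)`. -/
noncomputable def rise (p : ℤ) (q : ℝ) : ℝ :=
  Real.Gamma ((p : ℝ) + q) / Real.Gamma (p : ℝ)

/-- The discrete Mittag–Leffler function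
`F_{α,β}(λ,k,a) = ∑_{j=0}^∞ λ^j (k-a)^{\overline{jα+β-1}}/Γ(jα+β)`. -/
noncomputable def discML (α β lam : ℝ) (k a : ℤ) : ℝ :=
  ∑' j : ℕ, lam ^ j * rise (k - a) ((j : ℝ) * α + β - 1) / Real.Gamma ((j : ℝ) * α + β)

theorem Gamma_add_natCast_eq {γ : ℝ} (hγ : 0 < γ) (k : ℕ) :
    Real.Gamma (γ + k) = (ascPochhammer ℝ k).eval γ * Real.Gamma γ := by
  induction k with
  | zero => simp
  | succ k ih =>
    rw [ascPochhammer_succ_eval, Nat.cast_add_one, ← add_assoc,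
      Real.Gamma_add_one (by positivity), ih]
    ring

/-- The coefficients of the discrete Mittag–Leffler function are generalized binomial
coefficients. -/
theorem rise_div_Gamma {γ : ℝ} (hγ : 0 < γ) (k : ℕ) :
    rise (1 + k) (γ - 1) / Real.Gamma γ = Ring.choose (γ + k - 1) k := by
  have hG : Real.Gamma γ ≠ 0 := (Real.Gamma_pos_of_pos hγ).ne'
  have hk : (k.factorial : ℝ) ≠ 0 := by positivity
  have h := Ring.factorial_nsmul_multichoose_eq_ascPochhammer γ k
  rw [Ring.multichoose_eq, Polynomial.ascPochhammer_smeval_eq_eval, nsmul_eq_mul] at h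
  have e1 : (((1 + k : ℤ) : ℝ)) + (γ - 1) = γ + k := by push_cast; ring
  have e2 : (((1 + k : ℤ) : ℝ)) = k + 1 := by push_cast; ring
  rw [rise, e1, e2, Real.Gamma_nat_eq_factorial, Gamma_add_natCast_eq hγ, ← h]
  field_simp

theorem rise_div_Gamma_nonneg {γ : ℝ} (hγ : 0 < γ) (k : ℕ) :
    0 ≤ rise (1 + k) (γ - 1) / Real.Gamma γ := by
  have e1 : (((1 + k : ℤ) : ℝ)) + (γ - 1) = γ + k := by push_cast; ring
  rw [rise, e1]
  have h1 := Real.Gamma_pos_of_pos hγ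
  have h2 : 0 < Real.Gamma (γ + k) := Real.Gamma_pos_of_pos (by positivity)
  have h3 : 0 < Real.Gamma ((1 + k : ℤ) : ℝ) :=
    Real.Gamma_pos_of_pos (by push_cast; positivity)
  positivity

/-- The binomial series of `(1 - x)^(-γ)` at `x = 1 - s`. -/
theorem hasSum_rise {γ s : ℝ} (hγ : 0 < γ) (hs0 : 0 < s) (hs1 : s ≤ 1) :
    HasSum (fun k : ℕ => (1 - s) ^ k * (rise (1 + k) (γ - 1) / Real.Gamma γ)) (s ^ (-γ)) := by
  have hmem : (1 - s) ∈ Metric.eball (0 : ℝ) 1 := by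
    have h : |1 - s| < 1 := by rw [abs_lt]; constructor <;> linarith
    simpa [enorm_eq_nnnorm, ← NNReal.coe_lt_coe] using h
  have h := (Real.one_div_one_sub_rpow_hasFPowerSeriesOnBall_zero γ).hasSum hmem
  simp only [FormalMultilinearSeries.ofScalars_apply_eq, smul_eq_mul, zero_add,
    sub_sub_cancel] at h
  rw [one_div, ← Real.rpow_neg hs0.le] at h
  simp only [rise_div_Gamma hγ, mul_comm ((1 - s) ^ _)]
  exact h

/-- nabla Laplace transform of the discrete Mittag–Leffler function:
for `α, β > 0`, `0 < s ≤ 1` and `|λ| < s^α`,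
`∑_{k=1}^∞ (1-s)^{k-1} F_{α,β}(λ,k+a,a) = s^{α-β}/(s^α - λ)`. -/
theorem nabla_laplace_discML (a : ℤ) (α β : ℝ) (hα : 0 < α) (hβ : 0 < β)
    (s : ℝ) (hs0 : 0 < s) (hs1 : s ≤ 1) (lam : ℝ) (hlam : |lam| < s ^ α) :
    (∑' k : ℕ, (1 - s) ^ k * discML α β lam (a + 1 + k) a)
      = s ^ (α - β) / (s ^ α - lam) := by
  have hsα : 0 < s ^ α := Real.rpow_pos_of_pos hs0 α
  have hγ : ∀ j : ℕ, 0 < (j : ℝ) * α + β := fun j => by positivity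
  set c : ℕ → ℕ → ℝ := fun j k =>
    (1 - s) ^ k * (rise (1 + k) ((j : ℝ) * α + β - 1) / Real.Gamma ((j : ℝ) * α + β)) with hc
  have hc0 : ∀ j k, 0 ≤ c j k := fun j k =>
    mul_nonneg (pow_nonneg (by linarith) k) (rise_div_Gamma_nonneg (hγ j) k)
  have hcs : ∀ j, HasSum (c j) (s ^ (-((j : ℝ) * α + β))) := fun j =>
    hasSum_rise (hγ j) hs0 hs1
  have hpow : ∀ (x : ℝ) (j : ℕ),
      x ^ j * s ^ (-((j : ℝ) * α + β)) = s ^ (-β) * (x / s ^ α) ^ j := by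
    intro x j
    rw [neg_add, Real.rpow_add hs0, Real.rpow_neg hs0.le, mul_comm (j : ℝ) α,
      Real.rpow_mul_natCast hs0.le, div_pow]
    ring
  have hsum : Summable (Function.uncurry fun j k => lam ^ j * c j k) := by
    rw [← summable_abs_iff]
    have habs : ∀ j k, |lam ^ j * c j k| = |lam| ^ j * c j k := fun j k => by
      rw [abs_mul, abs_pow, abs_of_nonneg (hc0 j k)]
    rw [summable_prod_of_nonneg (fun _ => abs_nonneg _)]
    simp only [Function.uncurry_apply_pair, habs]
    refine ⟨fun j => (hcs j).summable.mul_left _, ?_⟩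
    simp only [tsum_mul_left, (hcs _).tsum_eq, hpow]
    refine (summable_geometric_of_lt_one (by positivity) ?_).mul_left _
    rwa [div_lt_one hsα]
  calc (∑' k : ℕ, (1 - s) ^ k * discML α β lam (a + 1 + k) a)
      = ∑' k : ℕ, ∑' j : ℕ, lam ^ j * c j k := by
        refine tsum_congr fun k => ?_
        have e : a + 1 + (k : ℤ) - a = 1 + k := by ring
        rw [discML, e, ← tsum_mul_left]
        refine tsum_congr fun j => ?_
        simp only [hc]
        ring
    _ = ∑' j : ℕ, ∑' k : ℕ, lam ^ j * c j k := hsum.tsum_comm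
    _ = ∑' j : ℕ, s ^ (-β) * (lam / s ^ α) ^ j := by
        simp only [tsum_mul_left, (hcs _).tsum_eq, hpow]
    _ = s ^ (α - β) / (s ^ α - lam) := by
        have hr : |lam / s ^ α| < 1 := by
          rwa [abs_div, abs_of_pos hsα, div_lt_one hsα]
        have hne : s ^ α - lam ≠ 0 := by
          have := le_abs_self lam
          intro h
          linarith
        rw [tsum_mul_left, tsum_geometric_of_abs_lt_one hr, sub_eq_add_neg α β,
          Real.rpow_add hs0]
        have hne' : 1 - lam / s ^ α ≠ 0 := by
          have := (abs_lt.1 hr).2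
          intro h
          linarith
        field_simp
end

section
/- Let a ∈ ℤ, γ > 0, μ > 0, and k ∈ ℕ_{a+1}. Then ∑_{j=0}^{k-a-1} [Γ(j+γ)/(Γ(γ)·Γ(j+1))] · (k-j-a)^{\overline{μ-1}}/Γ(μ) = (k-a)^{\overline{μ+γ-1}}/Γ(μ+γ). In other words, the γ-th nabla fractional sum of the function k ↦ (k-a)^{\overline{μ-1}}/Γ(μ) equals (k-a)^{\overline{μ+γ-1}}/Γ(μ+γ). -/
/-- The coefficient of `tⁿ` in `(1-t)^{-x}`, for `x > 0`. -/
noncomputable def gammaCoeff (x : ℝ) (n : ℕ) : ℝ :=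
  Real.Gamma ((n : ℝ) + x) / (Real.Gamma x * Real.Gamma ((n : ℝ) + 1))

lemma gammaCoeff_zero {x : ℝ} (hx : 0 < x) : gammaCoeff x 0 = 1 := by
  have := (Real.Gamma_pos_of_pos hx).ne'
  simp [gammaCoeff, this]

lemma gammaCoeff_succ {x : ℝ} (hx : 0 < x) (n : ℕ) :
    ((n : ℝ) + 1) * gammaCoeff x (n + 1) = (n + x) * gammaCoeff x n := by
  have h1 : (n : ℝ) + 1 ≠ 0 := by positivity
  have h2 : (n : ℝ) + x ≠ 0 := by positivity
  have h3 := (Real.Gamma_pos_of_pos hx).ne'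
  have h4 : Real.Gamma ((n : ℝ) + 1) ≠ 0 := (Real.Gamma_pos_of_pos (by positivity)).ne'
  unfold gammaCoeff
  push_cast
  rw [Real.Gamma_add_one h1, show (n : ℝ) + 1 + x = n + x + 1 by ring, Real.Gamma_add_one h2]
  field_simp

lemma gammaCoeff_convolution {x y : ℝ} (hx : 0 < x) (hy : 0 < y) (n : ℕ) :
    ∑ p ∈ Finset.HasAntidiagonal.antidiagonal n, gammaCoeff x p.1 * gammaCoeff y p.2 = gammaCoeff (x + y) n := by
  induction n with
  | zero => simp [gammaCoeff_zero, hx, hy, add_pos hx hy]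
  | succ n ih =>
    have h1 : (n : ℝ) + 1 ≠ 0 := by positivity
    apply mul_left_cancel₀ h1
    rw [gammaCoeff_succ (add_pos hx hy), ← ih]
    have hsplit : ((n : ℝ) + 1) *
        ∑ p ∈ Finset.HasAntidiagonal.antidiagonal (n + 1), gammaCoeff x p.1 * gammaCoeff y p.2
        = ∑ p ∈ Finset.HasAntidiagonal.antidiagonal (n + 1), ((p.1 : ℝ) * gammaCoeff x p.1) * gammaCoeff y p.2
        + ∑ p ∈ Finset.HasAntidiagonal.antidiagonal (n + 1), gammaCoeff x p.1 * ((p.2 : ℝ) * gammaCoeff y p.2) := by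
      rw [Finset.mul_sum, ← Finset.sum_add_distrib]
      refine Finset.sum_congr rfl fun p hp => ?_
      have h : (p.1 : ℝ) + p.2 = n + 1 := by exact_mod_cast Finset.HasAntidiagonal.mem_antidiagonal.mp hp
      rw [← h]
      ring
    -- The boundary terms `i = 0` and `j = 0` vanish, so both sums drop to the antidiagonal of `n`.
    rw [hsplit, Finset.Nat.sum_antidiagonal_succ, Finset.Nat.sum_antidiagonal_succ']
    simp only [Nat.cast_zero, zero_mul, mul_zero, zero_add, Nat.cast_add, Nat.cast_one,
      gammaCoeff_succ hx, gammaCoeff_succ hy]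
    rw [← Finset.sum_add_distrib, Finset.mul_sum]
    refine Finset.sum_congr rfl fun p hp => ?_
    have h : (p.1 : ℝ) + p.2 = n := by exact_mod_cast Finset.HasAntidiagonal.mem_antidiagonal.mp hp
    rw [← h]
    ring

lemma rise_div_Gamma_s6 (x : ℝ) (n : ℕ) :
    rise ((n : ℤ) + 1) (x - 1) / Real.Gamma x = gammaCoeff x n := by
  unfold rise gammaCoeff
  push_cast
  rw [show (n : ℝ) + 1 + (x - 1) = n + x by ring, div_div, mul_comm (Real.Gamma x)]

/-- for `γ, μ > 0` and `k ∈ ℕ_{a+1}`, the `γ`-th nabla fractional sum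
of `k ↦ (k-a)^{\overline{μ-1}}/Γ(μ)` equals `(k-a)^{\overline{μ+γ-1}}/Γ(μ+γ)`:
`∑_{j=0}^{k-a-1} (Γ(j+γ)/(Γ(γ)Γ(j+1))) · (k-j-a)^{\overline{μ-1}}/Γ(μ)
  = (k-a)^{\overline{μ+γ-1}}/Γ(μ+γ)`. -/
theorem nabla_fracsum_rising (a : ℤ) (γ μ : ℝ) (hγ : 0 < γ) (hμ : 0 < μ)
    (k : ℤ) (hk : a + 1 ≤ k) :
    ∑ j ∈ Finset.range (k - a).toNat,
        (Real.Gamma ((j : ℝ) + γ) / (Real.Gamma γ * Real.Gamma ((j : ℝ) + 1))) *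
          (rise (k - j - a) (μ - 1) / Real.Gamma μ)
      = rise (k - a) (μ + γ - 1) / Real.Gamma (μ + γ) := by
  obtain ⟨n, hn⟩ : ∃ n : ℕ, k - a = n + 1 := ⟨(k - a - 1).toNat, by omega⟩
  have hn' : (k - a).toNat = n + 1 := by omega
  rw [hn', hn, rise_div_Gamma_s6, add_comm μ γ, ← gammaCoeff_convolution hγ hμ,
    Finset.Nat.sum_antidiagonal_eq_sum_range_succ_mk]
  refine Finset.sum_congr rfl fun j hj => ?_
  have hj' : k - j - a = ((n - j : ℕ) : ℤ) + 1 := by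
    have := Finset.mem_range.mp hj
    omega
  rw [hj', rise_div_Gamma_s6]
  rfl
end

section
/- Let a ∈ ℤ, let α > 0 with n-1 < α < n for some positive integer n, let β > 0, γ > 0, and let λ be a real number with |λ| < 1. Then for every k ∈ ℕ_{a+1}, the γ-th nabla fractional sum of the discrete Mittag–Leffler function satisfies ₐ∇ₖ^{-γ} F_{α,β}(λ,k,a) = F_{α,β+γ}(λ,k,a). -/
/-- The `γ`-th nabla fractional sum
`ₐ∇ₖ^{-γ} f(k) = ∑_{j=0}^{k-a-1} (Γ(j+γ)/(Γ(γ)Γ(j+1))) f(k-j)`. -/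
noncomputable def nsum (a : ℤ) (γ : ℝ) (f : ℤ → ℝ) (k : ℤ) : ℝ :=
  ∑ j ∈ Finset.range (k - a).toNat,
    (Real.Gamma ((j : ℝ) + γ) / (Real.Gamma γ * Real.Gamma ((j : ℝ) + 1))) * f (k - j)

open Finset

/-- The rising binomial coefficient `x(x+1)⋯(x+m-1)/m!`. -/
noncomputable def risingBinom (x : ℝ) : ℕ → ℝ
  | 0 => 1
  | m + 1 => risingBinom x m * (x + m) / (m + 1)

lemma succ_mul_risingBinom (x : ℝ) (m : ℕ) :
    ((m : ℝ) + 1) * risingBinom x (m + 1) = (x + m) * risingBinom x m := by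
  have h : (m : ℝ) + 1 ≠ 0 := by positivity
  simp only [risingBinom]
  field_simp

lemma gamma_quot_eq_risingBinom {x : ℝ} (hx : 0 < x) (m : ℕ) :
    Real.Gamma ((m : ℝ) + x) / (Real.Gamma x * Real.Gamma ((m : ℝ) + 1)) = risingBinom x m := by
  have hG : Real.Gamma x ≠ 0 := (Real.Gamma_pos_of_pos hx).ne'
  induction m with
  | zero => simp [risingBinom, hG]
  | succ m ih =>
    have h1 : (m : ℝ) + x ≠ 0 := by positivity
    have h2 : (m : ℝ) + 1 ≠ 0 := by positivity
    have h3 : Real.Gamma ((m : ℝ) + 1) ≠ 0 := (Real.Gamma_pos_of_pos (by positivity)).ne'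
    rw [risingBinom, ← ih]
    push_cast
    rw [show (m : ℝ) + 1 + x = (m + x) + 1 by ring, Real.Gamma_add_one h1, Real.Gamma_add_one h2]
    field_simp
    ring

/-- The Chu–Vandermonde identity. Multiplying the sum for `m + 1` by `m + 1 = i + l` and applying
`succ_mul_risingBinom` to each part gives `x + y + m` times the sum for `m`, which is the recursion
satisfied by the right-hand side. -/
lemma risingBinom_vandermonde (x y : ℝ) (m : ℕ) :
    ∑ p ∈ antidiagonal m, risingBinom x p.1 * risingBinom y p.2 = risingBinom (x + y) m := by
  induction m with
  | zero => simp [risingBinom]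
  | succ m ih =>
    have h : (m : ℝ) + 1 ≠ 0 := by positivity
    apply mul_left_cancel₀ h
    rw [succ_mul_risingBinom, ← ih]
    have hsplit : ((m : ℝ) + 1) *
          ∑ p ∈ antidiagonal (m + 1), risingBinom x p.1 * risingBinom y p.2 =
        ∑ p ∈ antidiagonal (m + 1), (p.1 : ℝ) * risingBinom x p.1 * risingBinom y p.2 +
        ∑ p ∈ antidiagonal (m + 1), (p.2 : ℝ) * risingBinom y p.2 * risingBinom x p.1 := by
      rw [mul_sum, ← sum_add_distrib]
      refine sum_congr rfl fun p hp => ?_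
      have : ((p.1 : ℝ) + p.2) = m + 1 := by exact_mod_cast mem_antidiagonal.mp hp
      rw [← this]
      ring
    rw [hsplit, Nat.sum_antidiagonal_succ, Nat.sum_antidiagonal_succ']
    simp only [Nat.cast_zero, zero_mul, zero_add, Nat.cast_add, Nat.cast_one,
      succ_mul_risingBinom]
    rw [← sum_add_distrib, mul_sum]
    refine sum_congr rfl fun p hp => ?_
    have : ((p.1 : ℝ) + p.2) = m := by exact_mod_cast mem_antidiagonal.mp hp
    rw [← this]
    ring

/-- The extra power `j ^ p` makes the induction on `m` go through, as each step multiplies the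
general term by an affine function of `j`. -/
lemma summable_pow_mul_risingBinom (α β : ℝ) {lam : ℝ} (hlam : |lam| < 1) (m p : ℕ) :
    Summable fun j : ℕ => (j : ℝ) ^ p * (lam ^ j * risingBinom ((j : ℝ) * α + β) m) := by
  induction m generalizing p with
  | zero =>
    simpa [risingBinom] using summable_pow_mul_geometric_of_norm_lt_one p (r := lam) hlam
  | succ m ih =>
    have h := ((ih (p + 1)).mul_left (α / (m + 1))).add ((ih p).mul_left ((β + m) / (m + 1)))
    refine h.congr fun j => ?_
    simp only [risingBinom]
    ring

lemma summable_risingBinom (α β : ℝ) {lam : ℝ} (hlam : |lam| < 1) (m : ℕ) :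
    Summable fun j : ℕ => lam ^ j * risingBinom ((j : ℝ) * α + β) m := by
  simpa using summable_pow_mul_risingBinom α β hlam m 0

lemma discML_eq_tsum_risingBinom {α β : ℝ} (hα : 0 < α) (hβ : 0 < β) (lam : ℝ) {k a : ℤ} (m : ℕ)
    (hk : k - a = m + 1) :
    discML α β lam k a = ∑' j : ℕ, lam ^ j * risingBinom ((j : ℝ) * α + β) m := by
  unfold discML
  refine tsum_congr fun j => ?_
  have hx : 0 < (j : ℝ) * α + β := by positivity
  rw [← gamma_quot_eq_risingBinom hx, rise, hk]
  push_cast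
  rw [show (m : ℝ) + 1 + (j * α + β - 1) = m + (j * α + β) by ring, mul_div_assoc, div_div,
    mul_comm (Real.Gamma ((m : ℝ) + 1))]

/-- for `n-1 < α < n`, `β > 0`, `γ > 0` and `|λ| < 1`, the `γ`-th nabla
fractional sum of the discrete Mittag–Leffler function satisfies
`ₐ∇ₖ^{-γ} F_{α,β}(λ,k,a) = F_{α,β+γ}(λ,k,a)` for every `k ∈ ℕ_{a+1}`. -/
theorem nabla_fracsum_discML (a : ℤ) (n : ℕ) (hn : 0 < n) (α : ℝ)
    (hα1 : (n : ℝ) - 1 < α) (hα2 : α < n) (β γ : ℝ) (hβ : 0 < β) (hγ : 0 < γ)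
    (lam : ℝ) (hlam : |lam| < 1) (k : ℤ) (hk : a + 1 ≤ k) :
    nsum a γ (fun j => discML α β lam j a) k = discML α (β + γ) lam k a := by
  have hα : 0 < α := by
    have : (1 : ℝ) ≤ n := by exact_mod_cast hn
    linarith
  obtain ⟨m, hm⟩ : ∃ m : ℕ, k - a = m + 1 := ⟨(k - a - 1).toNat, by omega⟩
  have hN : (k - a).toNat = m + 1 := by omega
  rw [discML_eq_tsum_risingBinom hα (add_pos hβ hγ) lam m hm, nsum, hN]
  have hterm : ∀ i ∈ range (m + 1),
      Real.Gamma ((i : ℝ) + γ) / (Real.Gamma γ * Real.Gamma ((i : ℝ) + 1)) *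
        discML α β lam (k - i) a =
      ∑' j : ℕ, risingBinom γ i * (lam ^ j * risingBinom ((j : ℝ) * α + β) (m - i)) := by
    intro i hi
    have hi' : i < m + 1 := mem_range.mp hi
    rw [gamma_quot_eq_risingBinom hγ,
      discML_eq_tsum_risingBinom hα hβ lam (m - i) (by omega), tsum_mul_left]
  rw [sum_congr rfl hterm,
    ← Summable.tsum_finsetSum fun i _ => (summable_risingBinom α β hlam (m - i)).mul_left _]
  refine tsum_congr fun j => ?_
  rw [show (j : ℝ) * α + (β + γ) = γ + (j * α + β) by ring, ← risingBinom_vandermonde,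
    Nat.sum_antidiagonal_eq_sum_range_succ_mk, mul_sum]
  exact sum_congr rfl fun i _ => by ring
end

section
/- Let a ∈ ℤ, let n be a positive integer and n-1 < α < n, let κ be a natural number with κ < n, and let λ be a real number with |λ| < 1. Extend the discrete Mittag–Leffler function F_{α,κ+1}(λ,·,a) to arguments k ≤ a by setting F_{α,κ+1}(λ,k,a) := ∏_{i=0}^{κ-1}(k-a+i)/κ! (with the empty product equal to 1 when κ = 0). Then for every k ∈ ℕ_{a+1}, the nabla Caputo fractional difference satisfies ₐ∇ₖ^α F_{α,κ+1}(λ,k,a) = λ·F_{α,κ+1}(λ,k,a). -/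
/-- The discrete Mittag–Leffler function `F_{α,κ+1}(λ,k,a)` for `k ≥ a+1`, extended
to `k ≤ a` by `∏_{i=0}^{κ-1}(k-a+i)/κ!` (empty product `= 1` when `κ = 0`). -/
noncomputable def MLext (α : ℝ) (κ : ℕ) (lam : ℝ) (a k : ℤ) : ℝ :=
  if a + 1 ≤ k then
    ∑' j : ℕ, lam ^ j * rise (k - a) ((j : ℝ) * α + (κ : ℝ) + 1 - 1) /
      Real.Gamma ((j : ℝ) * α + (κ : ℝ) + 1)
  else (∏ i ∈ Finset.range κ, ((k : ℝ) - (a : ℝ) + (i : ℝ))) / (Nat.factorial κ : ℝ)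

/-- The `n`-th backward difference `∇ⁿ f(k) = ∑_{j=0}^n (-1)^j C(n,j) f(k-j)`. -/
noncomputable def bdiff (n : ℕ) (f : ℤ → ℝ) (k : ℤ) : ℝ :=
  ∑ j ∈ Finset.range (n + 1), (-1 : ℝ) ^ j * (n.choose j : ℝ) * f (k - j)

/-- The nabla Caputo fractional difference
`ₐ∇ₖ^α f(k) = ₐ∇ₖ^{-(n-α)}(∇ⁿ f)(k)` for `n-1 < α < n`. -/
noncomputable def caputo (a : ℤ) (α : ℝ) (n : ℕ) (f : ℤ → ℝ) (k : ℤ) : ℝ :=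
  nsum a ((n : ℝ) - α) (bdiff n f) k

open Finset Polynomial

theorem multichoose_eq_eval_div (β : ℝ) (m : ℕ) :
    Ring.multichoose β m = (ascPochhammer ℝ m).eval β / (m.factorial : ℝ) := by
  have h := Ring.factorial_nsmul_multichoose_eq_ascPochhammer β m
  rw [ascPochhammer_smeval_eq_eval, nsmul_eq_mul] at h
  rw [← h]
  field_simp

theorem gamma_add_nat (β : ℝ) (hβ : 0 < β) (m : ℕ) :
    Real.Gamma ((m : ℝ) + β) = (ascPochhammer ℝ m).eval β * Real.Gamma β := by
  induction m with
  | zero => simp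
  | succ m ih =>
    have : ((m + 1 : ℕ) : ℝ) + β = ((m : ℝ) + β) + 1 := by push_cast; ring
    rw [this, Real.Gamma_add_one (by positivity), ih, ascPochhammer_succ_eval]
    ring

theorem multichoose_eq_gamma (β : ℝ) (hβ : 0 < β) (m : ℕ) :
    Real.Gamma ((m : ℝ) + β) / (Real.Gamma β * Real.Gamma ((m : ℝ) + 1)) =
      Ring.multichoose β m := by
  have := (Real.Gamma_pos_of_pos hβ).ne'
  rw [multichoose_eq_eval_div, gamma_add_nat β hβ, Real.Gamma_nat_eq_factorial]
  field_simp

theorem multichoose_symm (κ m : ℕ) :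
    Ring.multichoose ((κ : ℝ) + 1) m = Ring.multichoose ((m : ℝ) + 1) κ := by
  rw [← multichoose_eq_gamma _ (by positivity), ← multichoose_eq_gamma _ (by positivity)]
  congr 1
  · congr 1; ring
  · ring

theorem multichoose_eq_choose_neg (β : ℝ) (m : ℕ) :
    Ring.multichoose β m = (-1) ^ m * Ring.choose (-β) m := by
  rw [Ring.choose_neg']
  rcases Nat.even_or_odd m with h | h
  · rw [Int.negOnePow_even _ (by exact_mod_cast h), h.neg_one_pow]; simp
  · rw [Int.negOnePow_odd _ (by exact_mod_cast h), h.neg_one_pow]; simp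

theorem multichoose_neg_nat (n j : ℕ) :
    Ring.multichoose (-(n : ℝ)) j = (-1) ^ j * (n.choose j : ℝ) := by
  rw [multichoose_eq_choose_neg, neg_neg, Ring.choose_natCast]

/-- The Chu–Vandermonde identity, i.e. `(1 - x) ^ (-β) * (1 - x) ^ (-γ) = (1 - x) ^ (-(β + γ))`. -/
theorem multichoose_add (β γ : ℝ) (m : ℕ) :
    Ring.multichoose (β + γ) m =
      ∑ ij ∈ antidiagonal m, Ring.multichoose β ij.1 * Ring.multichoose γ ij.2 := by
  rw [multichoose_eq_choose_neg, neg_add, Ring.add_choose_eq m (Commute.all _ _), mul_sum]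
  refine sum_congr rfl fun ij hij => ?_
  rw [multichoose_eq_choose_neg, multichoose_eq_choose_neg, ← mem_antidiagonal.mp hij, pow_add]
  ring

/-- The series `Φ b m = ∑ⱼ λ ^ j (jα + b)_m / m!`; the Mittag–Leffler function `F_{α,b}(λ,·,a)`
takes this value at `a + 1 + m`. -/
noncomputable def mlSeries (α lam b : ℝ) (m : ℕ) : ℝ :=
  ∑' j : ℕ, lam ^ j * Ring.multichoose ((j : ℝ) * α + b) m

theorem summable_mlSeries (α lam b : ℝ) (hlam : |lam| < 1) (m : ℕ) :
    Summable fun j : ℕ => lam ^ j * Ring.multichoose ((j : ℝ) * α + b) m := by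
  -- The Pochhammer factor is a polynomial in `j`, so the geometric factor dominates.
  set p : ℝ[X] := (ascPochhammer ℝ m).comp (X * C α + C b)
  have h : ∀ j : ℕ, lam ^ j * Ring.multichoose ((j : ℝ) * α + b) m =
      ∑ i ∈ range (p.natDegree + 1),
        p.coeff i / (m.factorial : ℝ) * ((j : ℝ) ^ i * lam ^ j) := by
    intro j
    have hp : (ascPochhammer ℝ m).eval ((j : ℝ) * α + b) = p.eval (j : ℝ) := by
      simp only [p, eval_comp, eval_add, eval_mul, eval_X, eval_C]
    rw [multichoose_eq_eval_div, hp, eval_eq_sum_range, sum_div, mul_sum]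
    exact sum_congr rfl fun i _ => by ring
  rw [funext h]
  refine summable_sum fun i _ => Summable.mul_left _ ?_
  exact summable_pow_mul_geometric_of_norm_lt_one i (by simpa using hlam)

theorem mlSeries_conv (α lam b γ : ℝ) (hlam : |lam| < 1) (m : ℕ) :
    ∑ ij ∈ antidiagonal m, Ring.multichoose γ ij.1 * mlSeries α lam b ij.2 =
      mlSeries α lam (b + γ) m := by
  unfold mlSeries
  simp_rw [← tsum_mul_left]
  have hs : ∀ ij ∈ antidiagonal m, Summable fun j : ℕ =>
      Ring.multichoose γ ij.1 * (lam ^ j * Ring.multichoose ((j : ℝ) * α + b) ij.2) := by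
    intro ij _
    apply Summable.mul_left
    exact summable_mlSeries α lam b hlam ij.2
  rw [← Summable.tsum_finsetSum hs]
  refine tsum_congr fun j => ?_
  rw [← add_assoc, add_comm _ γ, multichoose_add, mul_sum]
  exact sum_congr rfl fun _ _ => by ring

theorem mlSeries_eq_add (α lam b : ℝ) (hlam : |lam| < 1) (m : ℕ) :
    mlSeries α lam b m = Ring.multichoose b m + lam * mlSeries α lam (α + b) m := by
  unfold mlSeries
  rw [(summable_mlSeries α lam b hlam m).tsum_eq_zero_add, ← tsum_mul_left]
  congr 1
  · simp
  · refine tsum_congr fun j => ?_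
    rw [show ((j + 1 : ℕ) : ℝ) * α + b = (j : ℝ) * α + (α + b) by push_cast; ring]
    ring

theorem MLext_eq_mlSeries (α : ℝ) (hα : 0 < α) (κ : ℕ) (lam : ℝ) (a : ℤ) (m : ℕ) :
    MLext α κ lam a (a + 1 + m) = mlSeries α lam ((κ : ℝ) + 1) m := by
  rw [MLext, if_pos (by omega), mlSeries]
  refine tsum_congr fun j => ?_
  rw [← multichoose_eq_gamma _ (by positivity), rise]
  push_cast
  rw [show (a : ℝ) + 1 + m - a + (j * α + κ + 1 - 1) = m + (j * α + (κ + 1)) by ring,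
    show (a : ℝ) + 1 + m - a = m + 1 by ring, ← add_assoc, mul_div_assoc, div_div]
  ring_nf

/-- The splitting `F = P + λ Φ (α + κ + 1)`: `P` is polynomial in `k` on all of `ℤ`, and the
remainder vanishes for `k ≤ a`. -/
theorem MLext_split (α : ℝ) (hα : 0 < α) (κ : ℕ) (lam : ℝ) (hlam : |lam| < 1) (a k : ℤ) :
    MLext α κ lam a k = (ascPochhammer ℝ κ).eval ((k : ℝ) - a) / (κ.factorial : ℝ) +
      if a + 1 ≤ k then lam * mlSeries α lam (α + ((κ : ℝ) + 1)) (k - a - 1).toNat else 0 := by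
  by_cases hk : a + 1 ≤ k
  · obtain ⟨m, rfl⟩ : ∃ m : ℕ, k = a + 1 + m := ⟨(k - a - 1).toNat, by omega⟩
    rw [MLext_eq_mlSeries α hα, mlSeries_eq_add α lam _ hlam, if_pos hk, multichoose_symm,
      multichoose_eq_eval_div, show (a + 1 + (m : ℤ) - a - 1).toNat = m by omega]
    congr 3
    push_cast; ring
  · rw [MLext, if_neg hk, if_neg hk, add_zero]
    congr 1
    have (x : ℝ) (q : ℕ) : ∏ i ∈ range q, (x + i) = (ascPochhammer ℝ q).eval x := by
      induction q with
      | zero => simp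
      | succ q ih => rw [prod_range_succ, ih, ascPochhammer_succ_eval]
    exact this _ _

theorem bdiff_poly (n : ℕ) (p : ℝ[X]) (hp : p.natDegree < n) (a k : ℤ) :
    bdiff n (fun i => p.eval ((i : ℝ) - a)) k = 0 := by
  set q : ℝ[X] := p.comp (C ((k : ℝ) - a) - X) with hq
  have hdeg : q.natDegree < n := by
    refine lt_of_le_of_lt natDegree_comp_le ?_
    have : (C ((k : ℝ) - a) - X).natDegree ≤ 1 := by compute_degree
    nlinarith
  have h := congrFun (Polynomial.fwdDiff_iter_eq_zero_of_degree_lt hdeg) 0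
  rw [fwdDiff_iter_eq_sum_shift] at h
  have h2 : bdiff n (fun i => p.eval ((i : ℝ) - a)) k = (-1) ^ n * 0 := by
    rw [← show _ = (0 : ℝ) from h, bdiff, mul_sum]
    refine sum_congr rfl fun j hj => ?_
    have hs : (-1 : ℝ) ^ n * (-1) ^ (n - j) = (-1) ^ j := by
      have hjn : j ≤ n := by simpa [Nat.lt_succ_iff] using hj
      obtain ⟨d, rfl⟩ := Nat.exists_eq_add_of_le hjn
      rw [Nat.add_sub_cancel_left, pow_add, mul_assoc, ← pow_add, ← two_mul]
      simp
    have he : eval ((0 : ℝ) + j • 1) q = p.eval (((k - j : ℤ) : ℝ) - a) := by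
      simp only [hq, eval_comp, eval_sub, eval_C, eval_X]
      congr 1
      simp; ring
    rw [he, ← hs, zsmul_eq_mul]
    push_cast; ring
  rw [h2, mul_zero]

theorem bdiff_MLext (n : ℕ) (α : ℝ) (hα : 0 < α) (κ : ℕ) (hκ : κ < n) (lam : ℝ)
    (hlam : |lam| < 1) (a : ℤ) (m : ℕ) :
    bdiff n (fun i => MLext α κ lam a i) (a + 1 + m) =
      lam * mlSeries α lam (α + ((κ : ℝ) + 1) + -(n : ℝ)) m := by
  set R : ℕ → ℝ := mlSeries α lam (α + ((κ : ℝ) + 1)) with hR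
  have hP : ∑ j ∈ range (n + 1), (-1 : ℝ) ^ j * (n.choose j : ℝ) *
      (ascPochhammer ℝ κ).eval (((a + 1 + m - j : ℤ) : ℝ) - a) = 0 :=
    bdiff_poly n (ascPochhammer ℝ κ) (by rwa [ascPochhammer_natDegree]) a (a + 1 + m)
  have h1 : bdiff n (fun i => MLext α κ lam a i) (a + 1 + m) =
      ∑ j ∈ range (n + 1), if j ≤ m then
        Ring.multichoose (-(n : ℝ)) j * (lam * R (m - j)) else 0 := by
    rw [bdiff]
    simp_rw [MLext_split α hα κ lam hlam a, mul_add]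
    rw [sum_add_distrib]
    simp_rw [← mul_div_assoc]
    rw [← sum_div, hP, zero_div, zero_add]
    refine sum_congr rfl fun j _ => ?_
    by_cases hj : j ≤ m
    · rw [if_pos hj, if_pos (by omega), multichoose_neg_nat,
        show (a + 1 + (m : ℤ) - j - a - 1).toNat = m - j by omega]
    · rw [if_neg hj, if_neg (by omega), mul_zero]
  rw [h1, ← mlSeries_conv α lam _ _ hlam,
    Nat.sum_antidiagonal_eq_sum_range_succ (fun i l => Ring.multichoose (-(n : ℝ)) i * R l),
    mul_sum]
  -- Both index ranges extend to `range (n + m + 1)`: `n.choose j = 0` beyond `n`.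
  have e1 : range (n + 1) ⊆ range (n + m + 1) := by
    intro x; simp only [mem_range]; omega
  have e2 : range (m + 1) ⊆ range (n + m + 1) := by
    intro x; simp only [mem_range]; omega
  rw [sum_subset e1, ← sum_subset (f := fun j => if j ≤ m then
        Ring.multichoose (-(n : ℝ)) j * (lam * R (m - j)) else 0) e2]
  · refine sum_congr rfl fun j hj => ?_
    rw [if_pos (by simp only [mem_range] at hj; omega)]
    ring
  · intro j _ hj
    exact if_neg (by simp only [mem_range] at hj; omega)
  · intro j _ hj
    rw [multichoose_neg_nat, Nat.choose_eq_zero_of_lt (by simp only [mem_range] at hj; omega)]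
    simp

/-- for `n-1 < α < n`, `κ ∈ ℕ` with `κ < n` and `|λ| < 1`, the
discrete Mittag–Leffler function (extended below `a` as above) is an
eigenfunction of the nabla Caputo fractional difference:
`ₐ∇ₖ^α F_{α,κ+1}(λ,k,a) = λ·F_{α,κ+1}(λ,k,a)` for every `k ∈ ℕ_{a+1}`. -/
theorem caputo_discML (a : ℤ) (n : ℕ) (hn : 0 < n) (α : ℝ)
    (hα1 : (n : ℝ) - 1 < α) (hα2 : α < n) (κ : ℕ) (hκ : κ < n)
    (lam : ℝ) (hlam : |lam| < 1) (k : ℤ) (hk : a + 1 ≤ k) :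
    caputo a α n (fun j => MLext α κ lam a j) k = lam * MLext α κ lam a k := by
  have hn1 : (1 : ℝ) ≤ n := by exact_mod_cast hn
  have hα : 0 < α := by linarith
  obtain ⟨m, rfl⟩ : ∃ m : ℕ, k = a + 1 + m := ⟨(k - a - 1).toNat, by omega⟩
  have hb : (κ : ℝ) + 1 = α + ((κ : ℝ) + 1) + -(n : ℝ) + ((n : ℝ) - α) := by ring
  rw [MLext_eq_mlSeries α hα, hb, ← mlSeries_conv α lam _ _ hlam,
    Nat.sum_antidiagonal_eq_sum_range_succ (fun i l => Ring.multichoose ((n : ℝ) - α) i *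
      mlSeries α lam (α + ((κ : ℝ) + 1) + -(n : ℝ)) l), mul_sum, caputo, nsum,
    show (a + 1 + (m : ℤ) - a).toNat = m.succ by omega]
  refine sum_congr rfl fun j hj => ?_
  have hjm : j ≤ m := by simp only [mem_range] at hj; omega
  rw [multichoose_eq_gamma _ (by linarith),
    show a + 1 + (m : ℤ) - j = a + 1 + ((m - j : ℕ) : ℤ) by omega,
    bdiff_MLext n α hα κ hκ lam hlam]
  ring
end

section
/- Let a ∈ ℤ, α > 0, and let λ be a real number with λ ≠ 1. If ε : ℕ_{a+1} → ℝ satisfies ε(k) = λ · ∑_{j=0}^{k-a-1} [Γ(j+α)/(Γ(α)·Γ(j+1))] · ε(k-j) for every k ∈ ℕ_{a+1} (i.e., ε(k) = λ·ₐ∇ₖ^{-α}ε(k)), then ε(k) = 0 for every k ∈ ℕ_{a+1}. Consequently, the solution of the nabla fractional difference equation ₐ∇ₖ^α y(k) = λy(k) + u(k) with prescribed initial conditions ∇^κ y(a) = b_κ (κ = 0, …, n-1) is unique. -/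
lemma nsum_eq_self {a : ℤ} {γ : ℝ} (hγ : 0 < γ) {f : ℤ → ℝ} {k : ℤ} (hk : a + 1 ≤ k)
    (hf : ∀ m : ℤ, a + 1 ≤ m → m < k → f m = 0) : nsum a γ f k = f k := by
  unfold nsum
  rw [Finset.sum_eq_single 0]
  · have := (Real.Gamma_pos_of_pos hγ).ne'
    simp [this]
  · intro j hj hj0
    rw [Finset.mem_range] at hj
    rw [hf (k - j) (by omega) (by omega), mul_zero]
  · intro h
    exact absurd (Finset.mem_range.2 (by omega)) h

lemma bdiff_eq_self {n : ℕ} {f : ℤ → ℝ} {k : ℤ}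
    (hf : ∀ j : ℕ, 1 ≤ j → j ≤ n → f (k - j) = 0) : bdiff n f k = f k := by
  unfold bdiff
  rw [Finset.sum_eq_single 0]
  · simp
  · intro j hj hj0
    rw [Finset.mem_range] at hj
    rw [hf j (by omega) (by omega), mul_zero]
  · intro h
    exact absurd (Finset.mem_range.2 (by omega)) h

lemma bdiff_sub (n : ℕ) (f g : ℤ → ℝ) : bdiff n (f - g) = bdiff n f - bdiff n g := by
  funext k
  simp [bdiff, mul_sub, Finset.sum_sub_distrib]

lemma caputo_sub (a : ℤ) (α : ℝ) (n : ℕ) (f g : ℤ → ℝ) (k : ℤ) :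
    caputo a α n (f - g) k = caputo a α n f k - caputo a α n g k := by
  simp [caputo, bdiff_sub, nsum, mul_sub, Finset.sum_sub_distrib]

/-- Zero initial differences at `a` force zero values at `a, a - 1, …, a - n + 1`: once
`f (a - i) = 0` for `i < j`, the `j`-th difference at `a` is `(-1) ^ j * f (a - j)`. -/
lemma eq_zero_of_bdiff_eq_zero {a : ℤ} {n : ℕ} {f : ℤ → ℝ}
    (hf : ∀ κ : ℕ, κ < n → bdiff κ f a = 0) (j : ℕ) (hj : j < n) : f (a - j) = 0 := by
  induction j using Nat.strong_induction_on with
  | _ j ih =>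
    have h := hf j hj
    unfold bdiff at h
    rw [Finset.sum_range_succ, Finset.sum_eq_zero, zero_add] at h
    · simpa using h
    · intro i hi
      rw [Finset.mem_range] at hi
      rw [ih i hi (by omega), mul_zero]

lemma eq_zero_of_eq_mul_self {lam x : ℝ} (hlam : lam ≠ 1) (h : x = lam * x) : x = 0 := by
  by_contra hx
  exact hlam (mul_right_cancel₀ hx (by rw [one_mul]; exact h.symm))

/-- Strong induction on the integers `k ≥ a + 1`. -/
lemma int_strong_induction {a : ℤ} {P : ℤ → Prop}
    (h : ∀ k : ℤ, a + 1 ≤ k → (∀ m : ℤ, a + 1 ≤ m → m < k → P m) → P k) :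
    ∀ k : ℤ, a + 1 ≤ k → P k := by
  have key : ∀ N : ℕ, ∀ k : ℤ, a + 1 ≤ k → k < a + 1 + N → P k := by
    intro N
    induction N with
    | zero => intro k hk hN; omega
    | succ N ih =>
      intro k hk hN
      exact h k hk fun m hm hmk => ih m hm (by omega)
  intro k hk
  exact key (k - a).toNat k hk (by omega)

/-- for `α > 0` and `λ ≠ 1`, any `ε` with `ε(k) = λ·ₐ∇ₖ^{-α}ε(k)` on
`ℕ_{a+1}` vanishes there; consequently, the solution of
`ₐ∇ₖ^α y(k) = λy(k) + u(k)` with prescribed initial conditions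
`∇^κ y(a) = b_κ` (`κ = 0,…,n-1`) is unique. -/
theorem nabla_solution_unique (a : ℤ) (α : ℝ) (hα : 0 < α) (lam : ℝ) (hlam : lam ≠ 1) :
    (∀ ε : ℤ → ℝ, (∀ k : ℤ, a + 1 ≤ k → ε k = lam * nsum a α ε k) →
      ∀ k : ℤ, a + 1 ≤ k → ε k = 0) ∧
    (∀ n : ℕ, 0 < n → (n : ℝ) - 1 < α → α < n →
      ∀ (u : ℤ → ℝ) (b : ℕ → ℝ) (y z : ℤ → ℝ),
        (∀ k : ℤ, a + 1 ≤ k → caputo a α n y k = lam * y k + u k) →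
        (∀ k : ℤ, a + 1 ≤ k → caputo a α n z k = lam * z k + u k) →
        (∀ κ : ℕ, κ < n → bdiff κ y a = b κ) →
        (∀ κ : ℕ, κ < n → bdiff κ z a = b κ) →
        ∀ k : ℤ, a + 1 ≤ k → y k = z k) := by
  refine ⟨?_, ?_⟩
  · intro ε hε
    refine int_strong_induction fun k hk ih => ?_
    have h := hε k hk
    rw [nsum_eq_self hα hk ih] at h
    exact eq_zero_of_eq_mul_self hlam h
  · intro n _ _ hαn u b y z hy hz hby hbz
    have hinit : ∀ j : ℕ, j < n → (y - z) (a - j) = 0 :=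
      eq_zero_of_bdiff_eq_zero fun κ hκ => by
        rw [bdiff_sub, Pi.sub_apply, hby κ hκ, hbz κ hκ, sub_self]
    suffices H : ∀ k : ℤ, a + 1 ≤ k → (y - z) k = 0 from
      fun k hk => sub_eq_zero.1 (H k hk)
    refine int_strong_induction fun k hk ih => ?_
    -- The initial data extend the induction hypothesis back to `a + 1 - n`, which is the
    -- furthest point that the differences at `a + 1, …, k` can see.
    have hzero : ∀ m : ℤ, a + 1 - n ≤ m → m < k → (y - z) m = 0 := by
      intro m hm hmk
      by_cases hma : a + 1 ≤ m
      · exact ih m hma hmk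
      · have h := hinit (a - m).toNat (by omega)
        rwa [show a - ((a - m).toNat : ℤ) = m by omega] at h
    have hb : ∀ m : ℤ, a + 1 ≤ m → m ≤ k → bdiff n (y - z) m = (y - z) m := fun m hm hmk =>
      bdiff_eq_self fun j hj hjn => hzero (m - j) (by omega) (by omega)
    have hc : caputo a α n (y - z) k = (y - z) k := by
      unfold caputo
      rw [nsum_eq_self (sub_pos.2 hαn) hk, hb k hk le_rfl]
      intro m hm hmk
      rw [hb m hm hmk.le, ih m hm hmk]
    refine eq_zero_of_eq_mul_self hlam ?_
    rw [caputo_sub, hy k hk, hz k hk] at hc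
    rw [Pi.sub_apply] at hc ⊢
    linarith
end

section
/- Let a ∈ ℤ, let 0 < α ≤ 1, and let λ be a real number with -1 < λ < 0. Then the sequence k ↦ F_{α,1}(λ,k,a) is strictly decreasing on ℕ_{a+1} (i.e., F_{α,1}(λ,k+1,a) < F_{α,1}(λ,k,a) for all k ∈ ℕ_{a+1}) and converges to 0 as k → ∞. -/
open Finset Filter Topology

lemma succ_mul_multichoose (x : ℝ) (n : ℕ) :
    ((n : ℝ) + 1) * Ring.multichoose x (n + 1) = (x + n) * Ring.multichoose x n := by
  have h1 := Ring.factorial_nsmul_multichoose_eq_ascPochhammer x (n + 1)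
  have h2 := Ring.factorial_nsmul_multichoose_eq_ascPochhammer x n
  rw [Polynomial.ascPochhammer_smeval_eq_eval, nsmul_eq_mul] at h1 h2
  rw [ascPochhammer_succ_eval, ← h2, Nat.factorial_succ] at h1
  have h3 : (n.factorial : ℝ) ≠ 0 := by positivity
  push_cast at h1
  apply mul_left_cancel₀ h3
  linear_combination h1

lemma multichoose_nonneg {x : ℝ} (hx : 0 ≤ x) (n : ℕ) : 0 ≤ Ring.multichoose x n := by
  induction n with
  | zero => simp
  | succ n ih =>
    have h := succ_mul_multichoose x n
    have h1 : 0 ≤ (x + n) * Ring.multichoose x n := by positivity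
    rw [← h] at h1
    exact nonneg_of_mul_nonneg_right h1 (by positivity)

lemma multichoose_neg_nonpos {α : ℝ} (h0 : 0 < α) (h1 : α ≤ 1) (n : ℕ) :
    Ring.multichoose (-α) (n + 1) ≤ 0 := by
  induction n with
  | zero => simp [h0.le]
  | succ n ih =>
    have h := succ_mul_multichoose (-α) (n + 1)
    push_cast at h
    have h2 : (-α + (n + 1)) * Ring.multichoose (-α) (n + 1) ≤ 0 :=
      mul_nonpos_of_nonneg_of_nonpos
        (by have : (0 : ℝ) ≤ n := by positivity
            linarith) ih
    rw [← h] at h2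
    exact nonpos_of_mul_nonpos_right h2 (by positivity)

/-- The Chu–Vandermonde identity, for multiset coefficients. -/
lemma multichoose_add_s14 (x y : ℝ) (n : ℕ) :
    Ring.multichoose (x + y) n =
      ∑ p ∈ antidiagonal n, Ring.multichoose x p.1 * Ring.multichoose y p.2 := by
  have key : ∀ (r : ℝ) (k : ℕ), Ring.multichoose r k = (-1) ^ k * Ring.choose (-r) k := by
    intro r k
    rw [Ring.choose_neg, Int.negOnePow_def, ← Ring.multichoose_eq]
    simp [Units.smul_def, ← mul_assoc, ← mul_pow]
  rw [key, neg_add, Ring.add_choose_eq n (Commute.all _ _), mul_sum]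
  refine sum_congr rfl fun p hp => ?_
  rw [key x, key y, ← mem_antidiagonal.1 hp, pow_add]
  ring

/-- The numbers `A(s, n) = ∑ⱼ λ^j C(s + jα, n)`, the coefficients of
`(1 - z)^(-s) / (1 - λ (1 - z)^(-α))`. -/
noncomputable def mlSum (α lam s : ℝ) (n : ℕ) : ℝ :=
  ∑' j : ℕ, lam ^ j * Ring.multichoose (s + j * α) n

lemma summable_pow_mul_eval {lam : ℝ} (h : |lam| < 1) (Q : Polynomial ℝ) :
    Summable fun j : ℕ => lam ^ j * Q.eval (j : ℝ) := by
  simp_rw [Polynomial.eval_eq_sum_range, mul_sum]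
  refine summable_sum fun i _ => ?_
  refine ((summable_pow_mul_geometric_of_norm_lt_one i (r := lam) h).mul_left (Q.coeff i)).congr ?_
  intro j
  ring

lemma summable_mlSum (α s : ℝ) {lam : ℝ} (h : |lam| < 1) (n : ℕ) :
    Summable fun j : ℕ => lam ^ j * Ring.multichoose (s + j * α) n := by
  have h1 := (summable_pow_mul_eval h ((ascPochhammer ℝ n).comp
    (Polynomial.C s + Polynomial.X * Polynomial.C α))).mul_left ((n.factorial : ℝ)⁻¹)
  refine h1.congr fun j => ?_
  have h2 := Ring.factorial_nsmul_multichoose_eq_ascPochhammer (s + j * α) n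
  rw [Polynomial.ascPochhammer_smeval_eq_eval, nsmul_eq_mul] at h2
  simp only [Polynomial.eval_comp, Polynomial.eval_add, Polynomial.eval_C, Polynomial.eval_mul,
    Polynomial.eval_X, ← h2]
  have h3 : (n.factorial : ℝ) ≠ 0 := by positivity
  field_simp

lemma mlSum_eq_add (α s : ℝ) {lam : ℝ} (h : |lam| < 1) (n : ℕ) :
    mlSum α lam s n = Ring.multichoose s n + lam * mlSum α lam (s + α) n := by
  unfold mlSum
  rw [(summable_mlSum α s h n).tsum_eq_zero_add, ← tsum_mul_left]
  congr 1
  · simp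
  · refine tsum_congr fun j => ?_
    rw [show s + ((j + 1 : ℕ) : ℝ) * α = s + α + j * α by push_cast; ring]
    ring

lemma sum_mul_mlSum (α s t : ℝ) {lam : ℝ} (h : |lam| < 1) (n : ℕ) :
    ∑ p ∈ antidiagonal n, Ring.multichoose t p.1 * mlSum α lam s p.2 =
      mlSum α lam (s + t) n := by
  unfold mlSum
  simp_rw [← tsum_mul_left]
  rw [← Summable.tsum_finsetSum (f := fun (p : ℕ × ℕ) (j : ℕ) =>
    Ring.multichoose t p.1 * (lam ^ j * Ring.multichoose (s + j * α) p.2))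
    fun p _ => (summable_mlSum α s h p.2).mul_left _]
  refine tsum_congr fun j => ?_
  rw [show s + t + j * α = t + (s + j * α) by ring, multichoose_add_s14, mul_sum]
  exact sum_congr rfl fun p _ => by ring

lemma mlSum_succ_sub (α s : ℝ) {lam : ℝ} (h : |lam| < 1) (n : ℕ) :
    mlSum α lam (s + 1) (n + 1) = mlSum α lam s (n + 1) + mlSum α lam (s + 1) n := by
  unfold mlSum
  rw [← (summable_mlSum α s h (n + 1)).tsum_add (summable_mlSum α (s + 1) h n)]
  refine tsum_congr fun j => ?_
  rw [show s + 1 + j * α = (s + j * α) + 1 by ring, Ring.multichoose_succ_succ]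
  ring

lemma mlSum_pos {α s lam : ℝ} (hα0 : 0 < α) (hα1 : α ≤ 1) (h0 : -1 < lam) (h1 : lam < 0)
    (hs : α ≤ s) (n : ℕ) : 0 < mlSum α lam s n := by
  have h : |lam| < 1 := abs_lt.2 ⟨h0, by linarith⟩
  induction n using Nat.strong_induction_on with
  | _ n ih =>
    have hrec := sum_mul_mlSum α s (-α) h n
    rw [mlSum_eq_add α (s + -α) h, neg_add_cancel_right] at hrec
    have hC := multichoose_nonneg (x := s + -α) (by linarith) n
    rcases n with _ | n
    · simp at hrec
      by_contra! hneg
      nlinarith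
    · rw [Nat.sum_antidiagonal_succ] at hrec
      have hlt : ∑ p ∈ antidiagonal n, Ring.multichoose (-α) (p.1 + 1) * mlSum α lam s p.2 < 0 := by
        refine sum_neg' (fun p hp => ?_) ⟨(0, n), by simp, ?_⟩
        · have hp2 : p.2 < n + 1 := by
            have := mem_antidiagonal.1 hp
            omega
          exact mul_nonpos_of_nonpos_of_nonneg (multichoose_neg_nonpos hα0 hα1 _) (ih _ hp2).le
        · have := ih n (by omega)
          simp only [zero_add, Ring.multichoose_one_right]
          nlinarith
      simp only [Ring.multichoose_zero_right, one_mul] at hrec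
      by_contra! hneg
      nlinarith

lemma mlSum_one_succ_lt {α lam : ℝ} (hα0 : 0 < α) (hα1 : α ≤ 1) (h0 : -1 < lam) (h1 : lam < 0)
    (n : ℕ) : mlSum α lam 1 (n + 1) < mlSum α lam 1 n := by
  have h : |lam| < 1 := abs_lt.2 ⟨h0, by linarith⟩
  have h2 := mlSum_succ_sub α 0 h n
  rw [mlSum_eq_add α 0 h, zero_add, zero_add, Ring.multichoose_zero_succ] at h2
  have := mlSum_pos hα0 hα1 h0 h1 le_rfl (n + 1)
  nlinarith

/-- The product `C(2 - α, n) / (n + 1) = ∏ (1 - α / (i + 2))` is bounded through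
`1 + x ≤ exp x`. -/
lemma multichoose_two_sub_le {α : ℝ} (hα1 : α ≤ 1) (n : ℕ) :
    Ring.multichoose (2 - α) n ≤
      (n + 1) * Real.exp (α - α * ∑ i ∈ range (n + 1), 1 / ((i : ℝ) + 1)) := by
  induction n with
  | zero => simp
  | succ n ih =>
    have h := succ_mul_multichoose (2 - α) n
    have hn : (0 : ℝ) ≤ n := by positivity
    rw [sum_range_succ]
    set S := ∑ i ∈ range (n + 1), 1 / ((i : ℝ) + 1)
    push_cast
    rw [show α - α * (S + 1 / ((n : ℝ) + 1 + 1)) = (α - α * S) + -(α / (n + 2)) by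
      field_simp; ring, Real.exp_add]
    have he := Real.add_one_le_exp (-(α / ((n : ℝ) + 2)))
    have hE := Real.exp_pos (α - α * S)
    have h3 : 2 - α + n ≤ (n + 2) * Real.exp (-(α / ((n : ℝ) + 2))) := by
      calc 2 - α + n = (n + 2) * (-(α / ((n : ℝ) + 2)) + 1) := by field_simp; ring
        _ ≤ _ := by gcongr
    have h4 : ((n : ℝ) + 1) * Ring.multichoose (2 - α) (n + 1) ≤ (n + 1) *
        ((n + 1 + 1) * (Real.exp (α - α * S) * Real.exp (-(α / ((n : ℝ) + 2))))) := by
      rw [h]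
      calc (2 - α + n) * Ring.multichoose (2 - α) n
          ≤ ((n + 2) * Real.exp (-(α / ((n : ℝ) + 2)))) * ((n + 1) * Real.exp (α - α * S)) :=
            mul_le_mul h3 ih (multichoose_nonneg (by linarith) n) (by positivity)
        _ = _ := by ring
    exact le_of_mul_le_mul_left h4 (by positivity)

lemma mlSum_one_le {α lam : ℝ} (hα0 : 0 < α) (hα1 : α ≤ 1) (h0 : -1 < lam) (h1 : lam < 0)
    (n : ℕ) :
    mlSum α lam 1 n ≤
      (-lam)⁻¹ * Real.exp (α - α * ∑ i ∈ range (n + 1), 1 / ((i : ℝ) + 1)) := by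
  have h : |lam| < 1 := abs_lt.2 ⟨h0, by linarith⟩
  have hpos : 0 ≤ mlSum α lam (1 + (1 - α)) n := by
    rw [← sum_mul_mlSum α 1 (1 - α) h n]
    exact sum_nonneg fun p _ => mul_nonneg (multichoose_nonneg (by linarith) _)
      (mlSum_pos hα0 hα1 h0 h1 hα1 _).le
  have hanti : Antitone (mlSum α lam 1) :=
    antitone_nat_of_succ_le fun m => (mlSum_one_succ_lt hα0 hα1 h0 h1 m).le
  -- `C(1, ·) = 1`, so convolving with it produces partial sums.
  have hsum : ((n : ℝ) + 1) * mlSum α lam 1 n ≤ mlSum α lam 2 n := by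
    rw [show (2 : ℝ) = 1 + 1 by norm_num, ← sum_mul_mlSum α 1 1 h n]
    calc ((n : ℝ) + 1) * mlSum α lam 1 n = ∑ p ∈ antidiagonal n, mlSum α lam 1 n := by
          simp
      _ ≤ _ := by
          refine sum_le_sum fun p hp => ?_
          rw [Ring.multichoose_one, one_mul]
          apply hanti
          have := mem_antidiagonal.1 hp
          omega
  rw [mlSum_eq_add α _ h, show 1 + (1 - α) + α = 2 by ring, show 1 + (1 - α) = 2 - α by ring]
    at hpos
  have hC := multichoose_two_sub_le hα1 n
  set E := Real.exp (α - α * ∑ i ∈ range (n + 1), 1 / ((i : ℝ) + 1))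
  have hn : (0 : ℝ) < n + 1 := by positivity
  have h5 : ((n : ℝ) + 1) * (-lam * mlSum α lam 1 n) ≤ (n + 1) * E := by nlinarith
  have h6 := le_of_mul_le_mul_left h5 hn
  rw [inv_mul_eq_div, le_div_iff₀ (by linarith)]
  linarith

lemma discML_eq_mlSum {α : ℝ} (hα0 : 0 < α) (lam : ℝ) (a : ℤ) (n : ℕ) :
    discML α 1 lam (a + 1 + n) a = mlSum α lam 1 n := by
  unfold discML mlSum rise
  refine tsum_congr fun j => ?_
  rw [mul_div_assoc]
  congr 1
  rw [show ((a + 1 + n - a : ℤ) : ℝ) = n + 1 by push_cast; ring, add_comm ((j : ℝ) * α) 1,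
    Real.Gamma_nat_eq_factorial]
  have hx : (0 : ℝ) < 1 + j * α := by positivity
  rw [show (n : ℝ) + 1 + (1 + j * α - 1) = 1 + j * α + n by ring]
  generalize 1 + (j : ℝ) * α = x at hx
  have key : Real.Gamma (x + n) = n.factorial * Ring.multichoose x n * Real.Gamma x := by
    induction n with
    | zero => simp
    | succ n ih =>
      have h := succ_mul_multichoose x n
      rw [Nat.cast_succ, ← add_assoc, Real.Gamma_add_one (by positivity), ih, Nat.factorial_succ]
      push_cast
      linear_combination (-(n.factorial : ℝ) * Real.Gamma x) * h
  have := (Real.Gamma_pos_of_pos hx).ne'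
  have h3 : (n.factorial : ℝ) ≠ 0 := by positivity
  rw [key]
  field_simp

/-- for `0 < α ≤ 1` and `-1 < λ < 0`, the sequence
`k ↦ F_{α,1}(λ,k,a)` is strictly decreasing on `ℕ_{a+1}` and converges to `0`. -/
theorem discML_monotone_convergent (a : ℤ) (α : ℝ) (hα0 : 0 < α) (hα1 : α ≤ 1)
    (lam : ℝ) (hlam0 : -1 < lam) (hlam1 : lam < 0) :
    (∀ k : ℤ, a + 1 ≤ k → discML α 1 lam (k + 1) a < discML α 1 lam k a) ∧
    Filter.Tendsto (fun k : ℕ => discML α 1 lam (a + 1 + k) a)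
      Filter.atTop (nhds 0) := by
  constructor
  · intro k hk
    obtain ⟨n, rfl⟩ := Int.le.dest hk
    rw [discML_eq_mlSum hα0, show a + 1 + (n : ℤ) + 1 = a + 1 + ((n + 1 : ℕ) : ℤ) by push_cast; ring,
      discML_eq_mlSum hα0]
    exact mlSum_one_succ_lt hα0 hα1 hlam0 hlam1 n
  · simp_rw [discML_eq_mlSum hα0]
    refine squeeze_zero (fun n => (mlSum_pos hα0 hα1 hlam0 hlam1 hα1 n).le)
      (fun n => mlSum_one_le hα0 hα1 hlam0 hlam1 n) ?_
    rw [← mul_zero (-lam)⁻¹]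
    refine Tendsto.const_mul _ (Real.tendsto_exp_atBot.comp ?_)
    have hH := (tendsto_add_atTop_iff_nat 1).2 Real.tendsto_sum_range_one_div_nat_succ_atTop
    simp_rw [sub_eq_add_neg]
    exact tendsto_atBot_add_const_left _ _
      (tendsto_neg_atTop_atBot.comp (hH.const_mul_atTop hα0))
end

section
/- Let a ∈ ℤ, let 1 < α ≤ 2, and let λ be a real number with -1 < λ < 0. Then both F_{α,1}(λ,k,a) → 0 and F_{α,2}(λ,k,a) → 0 as k → ∞; that is, the zero-input response y(k) = b₀·F_{α,1}(λ,k,a) + b₁·F_{α,2}(λ,k,a) converges to 0 as k → ∞ for any b₀, b₁ ∈ ℝ. -/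
open Complex MeasureTheory Filter Topology Metric
open scoped Real NNReal

/-! ### Taylor coefficients as integrals over circles -/

lemma cauchy_coeff_eq (f : ℂ → ℂ) {r : ℝ} (hr : r ≠ 0) (n : ℕ) :
    cauchyPowerSeries f 0 r n (fun _ => 1) =
      (2 * π : ℂ)⁻¹ * ∫ θ in (0 : ℝ)..2 * π, (circleMap 0 r θ)⁻¹ ^ n * f (circleMap 0 r θ) := by
  rw [cauchyPowerSeries_apply, circleIntegral]
  have h : ∀ θ : ℝ, deriv (circleMap 0 r) θ • ((1 / (circleMap 0 r θ - 0)) ^ n •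
      (circleMap 0 r θ - 0)⁻¹ • f (circleMap 0 r θ)) =
      I * ((circleMap 0 r θ)⁻¹ ^ n * f (circleMap 0 r θ)) := by
    intro θ
    have h0 : circleMap 0 r θ ≠ 0 := circleMap_ne_center hr
    simp only [deriv_circleMap, smul_eq_mul, sub_zero, one_div]
    field_simp
  rw [intervalIntegral.integral_congr (fun θ _ => h θ), intervalIntegral.integral_const_mul,
    smul_eq_mul]
  have hpi : (π : ℂ) ≠ 0 := by exact_mod_cast Real.pi_ne_zero
  have hI := I_ne_zero
  field_simp

/-- Cauchy's coefficient integral over any circle of radius `r < 1` gives the Taylor coefficient. -/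
lemma cauchy_coeff_of_hasFPowerSeriesAt {f : ℂ → ℂ} (hf : DifferentiableOn ℂ f (ball 0 1))
    {r : ℝ} (hr0 : 0 < r) (hr1 : r < 1) {p : FormalMultilinearSeries ℂ ℂ ℂ}
    (hp : HasFPowerSeriesAt f p 0) (n : ℕ) :
    cauchyPowerSeries f 0 r n (fun _ => 1) = p n (fun _ => 1) := by
  lift r to ℝ≥0 using hr0.le
  have h1 := (DifferentiableOn.hasFPowerSeriesOnBall (R := r)
    (hf.mono (closedBall_subset_ball hr1)) (by exact_mod_cast hr0)).hasFPowerSeriesAt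
  rw [h1.eq_formalMultilinearSeries hp]

lemma choose_eq_Gamma {s : ℝ} (hs : 0 < s) (n : ℕ) :
    Ring.choose (s + n - 1) n = Real.Gamma (n + s) / (Real.Gamma (n + 1) * Real.Gamma s) := by
  have key : ∀ n : ℕ, Real.Gamma (n + s) = (ascPochhammer ℝ n).eval s * Real.Gamma s := by
    intro n
    induction n with
    | zero => simp
    | succ n ih =>
      rw [ascPochhammer_succ_eval, show ((n + 1 : ℕ) : ℝ) + s = (n + s) + 1 by push_cast; ring,
        Real.Gamma_add_one (by positivity), ih]
      ring
  have hG := (Real.Gamma_pos_of_pos hs).ne'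
  rw [key, Real.Gamma_nat_eq_factorial, Ring.choose_eq_smul,
    Polynomial.descPochhammer_smeval_eq_ascPochhammer, Polynomial.ascPochhammer_smeval_cast,
    Polynomial.ascPochhammer_smeval_eq_eval, show s + n - 1 - n + 1 = s by ring]
  have : (n.factorial : ℝ) ≠ 0 := by positivity
  rw [smul_eq_mul]
  field_simp

lemma one_sub_mem_slitPlane {z : ℂ} (hz : z ∈ ball (0 : ℂ) 1) : 1 - z ∈ slitPlane := by
  left
  have := (abs_le.mp (Complex.abs_re_le_norm z)).2
  rw [mem_ball_zero_iff] at hz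
  simp only [sub_re, one_re]
  linarith

lemma differentiableOn_one_sub_cpow (c : ℂ) :
    DifferentiableOn ℂ (fun z : ℂ => (1 - z) ^ c) (ball 0 1) := fun _ hz =>
  ((differentiableAt_const _).sub differentiableAt_id).cpow_const
    (one_sub_mem_slitPlane hz) |>.differentiableWithinAt

/-- The terms of the Mittag-Leffler series, up to powers of `λ`, are Taylor coefficients of
`(1 - z)^(-s)`. -/
lemma integral_one_sub_cpow {s : ℝ} (hs : 0 < s) {r : ℝ} (hr0 : 0 < r) (hr1 : r < 1) (n : ℕ) :
    (2 * π : ℂ)⁻¹ * ∫ θ in (0 : ℝ)..2 * π,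
      (circleMap 0 r θ)⁻¹ ^ n * (1 - circleMap 0 r θ) ^ (-s : ℂ) =
    ((Real.Gamma (n + s) / (Real.Gamma (n + 1) * Real.Gamma s) : ℝ) : ℂ) := by
  have hp := (one_div_one_sub_cpow_hasFPowerSeriesOnBall_zero (s : ℂ)).hasFPowerSeriesAt
  simp only [one_div, ← cpow_neg] at hp
  have := cauchy_coeff_of_hasFPowerSeriesAt (differentiableOn_one_sub_cpow _) hr0 hr1 hp n
  rw [cauchy_coeff_eq _ hr0.ne'] at this
  rw [this, ← choose_eq_Gamma hs, Complex.ofReal_choose]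
  simp [FormalMultilinearSeries.ofScalars]

/-! ### Estimates on the closed unit disc -/

/-- This is where `α ≤ 2` matters: for `z ≠ 1` in the closed unit disc `|arg (1 - z)| < π / 2`, so
`(1 - z)^α` has argument `α arg (1 - z)` of modulus less than `π` and is not a negative real. -/
lemma cpow_add_ne_zero {α μ : ℝ} (hα0 : 0 < α) (hα2 : α ≤ 2) (hμ : 0 < μ) {z : ℂ}
    (hz : ‖z‖ ≤ 1) : (1 - z) ^ (α : ℂ) + μ ≠ 0 := by
  by_cases h1 : 1 - z = 0
  · rw [h1, zero_cpow (by exact_mod_cast hα0.ne')]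
    simpa using hμ.ne'
  have hre : 0 < (1 - z).re := by
    simp only [sub_re, one_re, sub_pos]
    refine lt_of_le_of_ne ((le_abs_self _).trans ((abs_re_le_norm z).trans hz)) fun h => h1 ?_
    have h2 := Complex.sq_norm z
    rw [Complex.normSq_apply, h] at h2
    have h3 : z.im = 0 := by nlinarith [norm_nonneg z]
    apply Complex.ext <;> simp [h, h3]
  have harg := abs_lt.mp (abs_arg_lt_pi_div_two_iff.mpr (Or.inl hre))
  intro h
  have h2 : (1 - z) ^ (α : ℂ) = ((-μ : ℝ) : ℂ) := by
    push_cast; exact eq_neg_of_add_eq_zero_left h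
  have h3 : Complex.log ((1 - z) ^ (α : ℂ)) = Complex.log (1 - z) * α := by
    rw [cpow_def_of_ne_zero h1]
    have him : (Complex.log (1 - z) * (α : ℂ)).im = (1 - z).arg * α := by
      simp [Complex.log_im]
    apply Complex.log_exp <;> rw [him] <;> nlinarith [Real.pi_pos]
  have h4 := congrArg Complex.im h3
  rw [h2, Complex.log_im, arg_ofReal_of_neg (by linarith), im_mul_ofReal, Complex.log_im] at h4
  nlinarith [Real.pi_pos]

lemma exists_lower_bound {α μ : ℝ} (hα0 : 0 < α) (hα2 : α ≤ 2) (hμ : 0 < μ) :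
    ∃ m > 0, ∀ z : ℂ, ‖z‖ ≤ 1 → m ≤ ‖(1 - z) ^ (α : ℂ) + μ‖ := by
  have hc : ContinuousOn (fun z : ℂ => ‖(1 - z) ^ (α : ℂ) + μ‖) (closedBall 0 1) := by
    intro z hz
    rw [mem_closedBall_zero_iff] at hz
    apply ContinuousAt.continuousWithinAt
    refine ContinuousAt.norm (ContinuousAt.add ?_ continuousAt_const)
    refine ContinuousAt.comp (f := fun z : ℂ => 1 - z) (g := fun w : ℂ => w ^ (α : ℂ))
      (continuousAt_cpow_const_of_re_pos (Or.inl ?_) (by simpa)) (by fun_prop)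
    have := (abs_le.mp (Complex.abs_re_le_norm z)).2
    simp only [sub_re, one_re]
    linarith
  obtain ⟨z, hz, hmin⟩ := (isCompact_closedBall (0 : ℂ) 1).exists_isMinOn ⟨0, by simp⟩ hc
  refine ⟨_, norm_pos_iff.mpr (cpow_add_ne_zero hα0 hα2 hμ (mem_closedBall_zero_iff.mp hz)),
    fun w hw => hmin (mem_closedBall_zero_iff.mpr hw)⟩

lemma sin_half_le {r θ : ℝ} (hr : 0 ≤ r) :
    Real.sin (θ / 2) ≤ ‖1 - circleMap 0 r θ‖ := by
  apply Real.le_sqrt_of_sq_le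
  rw [Complex.normSq_apply]
  have h1 : (1 - circleMap 0 r θ).re = 1 - r * Real.cos θ := by
    simp [circleMap, ← ofReal_cos, ← ofReal_sin, exp_mul_I]
  have h2 : (1 - circleMap 0 r θ).im = - (r * Real.sin θ) := by
    simp [circleMap, ← ofReal_cos, ← ofReal_sin, exp_mul_I]
  rw [h1, h2]
  have h3 : Real.cos θ = 1 - 2 * Real.sin (θ / 2) ^ 2 := by
    have := Real.cos_two_mul' (θ / 2)
    rw [show 2 * (θ / 2) = θ by ring] at this
    nlinarith [Real.sin_sq_add_cos_sq (θ / 2)]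
  have h4 := Real.sin_sq_add_cos_sq θ
  have h5 := Real.sin_sq_le_one (θ / 2)
  set t := Real.sin (θ / 2) ^ 2 with ht
  have h6 : 0 ≤ t := sq_nonneg _
  have : (1 - r * Real.cos θ) * (1 - r * Real.cos θ) + -(r * Real.sin θ) * -(r * Real.sin θ)
      = 1 - 2 * r * (1 - 2 * t) + r ^ 2 := by
    rw [← h3]; linear_combination r ^ 2 * h4
  rw [this]
  -- the difference of the two sides is `(r - (1 - 2t))² + t (3 - 4t)`
  by_cases h : t ≤ 3 / 4
  · nlinarith [sq_nonneg (r - (1 - 2 * t))]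
  · nlinarith [mul_nonneg hr (by linarith : 0 ≤ 2 * t - 1), sq_nonneg r]

/-- A bound uniform in `r` for dominated convergence as `r → 1`. One of the first two summands bounds the
left side when `p ≤ 0` (Jordan's inequality near either endpoint), the last one when `0 ≤ p`. -/
lemma norm_rpow_le {r θ p : ℝ} (hr0 : 0 ≤ r) (hr1 : r ≤ 1) (h0 : 0 < θ) (h1 : θ < 2 * π) :
    ‖1 - circleMap 0 r θ‖ ^ p ≤
      (θ / π) ^ p + ((2 * π - θ) / π) ^ p + 2 ^ p := by
  have hpi := Real.pi_pos
  have e1 : 0 < θ / π := by positivity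
  have e2 : 0 < (2 * π - θ) / π := div_pos (by linarith) hpi
  have f1 := Real.rpow_pos_of_pos e1 p
  have f2 := Real.rpow_pos_of_pos e2 p
  have f3 := Real.rpow_pos_of_pos (two_pos : (0:ℝ) < 2) p
  have hs := sin_half_le (θ := θ) hr0
  have hle : ‖1 - circleMap 0 r θ‖ ≤ 2 := by
    refine (norm_sub_le _ _).trans ?_
    simp only [norm_one, norm_circleMap_zero, abs_of_nonneg hr0]
    linarith
  rcases le_total 0 p with hp | hp
  · linarith [Real.rpow_le_rpow (norm_nonneg _) hle hp]
  rcases le_total θ π with h | h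
  · have := Real.mul_le_sin (x := θ / 2) (by linarith) (by linarith)
    rw [show 2 / π * (θ / 2) = θ / π by ring] at this
    linarith [Real.rpow_le_rpow_of_nonpos e1 (this.trans hs) hp]
  · have := Real.mul_le_sin (x := π - θ / 2) (by linarith) (by linarith)
    rw [show 2 / π * (π - θ / 2) = (2 * π - θ) / π by ring, Real.sin_pi_sub] at this
    linarith [Real.rpow_le_rpow_of_nonpos e2 (this.trans hs) hp]

lemma bound_integrable {p : ℝ} (hp : -1 < p) :
    IntervalIntegrable (fun θ : ℝ => (θ / π) ^ p + ((2 * π - θ) / π) ^ p + 2 ^ p)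
      volume 0 (2 * π) := by
  have h1 : IntervalIntegrable (fun θ : ℝ => (θ / π) ^ p) volume 0 (2 * π) := by
    have := (intervalIntegral.intervalIntegrable_rpow' (a := 0) (b := 2) hp).comp_mul_right
      (c := π⁻¹)
    simpa [div_eq_mul_inv] using this
  have h2 : IntervalIntegrable (fun θ : ℝ => ((2 * π - θ) / π) ^ p) volume 0 (2 * π) := by
    have := (h1.comp_sub_left (2 * π)).symm
    simpa using this
  exact (h1.add h2).add intervalIntegrable_const

/-! ### The generating function -/

/-- The generating function `(1 - z)^(α - β) / ((1 - z)^α + μ)` of `k ↦ F_{α,β}(-μ, a + 1 + k, a)`,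
with principal branches of the powers. -/
noncomputable def genFun (α β μ : ℝ) (z : ℂ) : ℂ :=
  (1 - z) ^ ((α - β : ℝ) : ℂ) / ((1 - z) ^ (α : ℂ) + μ)

lemma measurable_genFun (α β μ : ℝ) : Measurable (genFun α β μ) := by
  unfold genFun
  fun_prop

lemma differentiableOn_genFun {α μ : ℝ} (β : ℝ) (hα0 : 0 < α) (hα2 : α ≤ 2) (hμ : 0 < μ) :
    DifferentiableOn ℂ (genFun α β μ) (ball 0 1) :=
  (differentiableOn_one_sub_cpow _).div ((differentiableOn_one_sub_cpow _).add_const _)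
    fun _ hz => cpow_add_ne_zero hα0 hα2 hμ (mem_ball_zero_iff.mp hz).le

/-- Geometric expansion of the generating function in powers of `-μ (1 - z)^(-α)`; it is valid only
for `z` far enough from `1`. -/
lemma hasSum_genFun {α β μ : ℝ} {z : ℂ} (hz : z ∈ ball (0 : ℂ) 1)
    (hq : μ * ‖1 - z‖ ^ (-α) < 1) (hμ : 0 < μ) :
    HasSum (fun j : ℕ => ((-μ : ℝ) : ℂ) ^ j * (1 - z) ^ (-((j * α + β : ℝ) : ℂ)))
      (genFun α β μ z) := by
  have hw : 1 - z ≠ 0 := slitPlane_ne_zero (one_sub_mem_slitPlane hz)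
  have hn : ‖((-μ : ℝ) : ℂ) * (1 - z) ^ (-(α : ℂ))‖ < 1 := by
    rw [norm_mul, norm_real, Real.norm_eq_abs, abs_neg, abs_of_pos hμ, ← ofReal_neg,
      norm_cpow_real]
    exact hq
  have h := (hasSum_geometric_of_norm_lt_one hn).mul_left ((1 - z) ^ (-(β : ℂ)))
  have hd : 1 - ((-μ : ℝ) : ℂ) * (1 - z) ^ (-(α : ℂ)) ≠ 0 := by
    intro h0
    rw [← sub_eq_zero.mp h0] at hn
    simp at hn
  have hwα : (1 - z) ^ (α : ℂ) ≠ 0 := by simp [cpow_eq_zero_iff, hw]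
  convert! h using 1
  · funext j
    rw [mul_pow, ← cpow_nat_mul, mul_left_comm, ← cpow_add _ _ hw]
    congr 2
    push_cast
    ring
  · rw [genFun, ofReal_sub, cpow_sub _ _ hw, cpow_neg, cpow_neg]
    rw [cpow_neg] at hd
    have hwβ : (1 - z) ^ (β : ℂ) ≠ 0 := by simp [cpow_eq_zero_iff, hw]
    have e : (1 - z) ^ (α : ℂ) + μ =
        (1 - z) ^ (α : ℂ) * (1 - ((-μ : ℝ) : ℂ) * ((1 - z) ^ (α : ℂ))⁻¹) := by
      push_cast
      field_simp
      ring
    rw [e]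
    field_simp

/-- On a small circle the geometric expansion may be integrated term by term, so the
Mittag-Leffler series sums to the `n`-th Taylor coefficient of `genFun α β μ`. -/
lemma hasSum_integral_genFun {α β μ : ℝ} (hα0 : 0 < α) (hβ : 0 < β)
    (hμ : 0 < μ) {r : ℝ} (hr0 : 0 < r) (hr1 : r < 1) (hr : μ * (1 - r) ^ (-α) < 1) (n : ℕ) :
    HasSum (fun j : ℕ => (((-μ) ^ j * (Real.Gamma (n + (j * α + β)) /
        (Real.Gamma (n + 1) * Real.Gamma (j * α + β))) : ℝ) : ℂ))
      ((2 * π : ℂ)⁻¹ * ∫ θ in (0 : ℝ)..2 * π,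
        (circleMap 0 r θ)⁻¹ ^ n * genFun α β μ (circleMap 0 r θ)) := by
  have hball : ∀ θ, circleMap 0 r θ ∈ ball (0 : ℂ) 1 := fun θ => by
    simpa [abs_of_pos hr0] using hr1
  have hge : ∀ θ, 1 - r ≤ ‖1 - circleMap 0 r θ‖ := fun θ => by
    have := norm_sub_norm_le (1 : ℂ) (circleMap 0 r θ)
    simpa [abs_of_pos hr0] using this
  have h1r : 0 < 1 - r := by linarith
  have hb : ∀ s : ℝ, 0 ≤ s → ∀ θ, ‖1 - circleMap 0 r θ‖ ^ (-s) ≤ (1 - r) ^ (-s) := fun s hs θ =>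
    Real.rpow_le_rpow_of_nonpos h1r (hge θ) (by linarith)
  have hsum : Summable fun j : ℕ =>
      r⁻¹ ^ n * (1 - r) ^ (-β) * (μ * (1 - r) ^ (-α)) ^ j :=
    (summable_geometric_of_lt_one (by positivity) hr).mul_left _
  have key := intervalIntegral.hasSum_integral_of_dominated_convergence
    (μ := volume) (a := 0) (b := 2 * π)
    (F := fun (j : ℕ) θ => (circleMap 0 r θ)⁻¹ ^ n *
      (((-μ : ℝ) : ℂ) ^ j * (1 - circleMap 0 r θ) ^ (-((j * α + β : ℝ) : ℂ))))
    (f := fun θ => (circleMap 0 r θ)⁻¹ ^ n * genFun α β μ (circleMap 0 r θ))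
    (fun j _ => r⁻¹ ^ n * (1 - r) ^ (-β) * (μ * (1 - r) ^ (-α)) ^ j)
    (fun j => by
      have := (continuous_circleMap 0 r).measurable
      exact Measurable.aestronglyMeasurable (by fun_prop))
    (fun j => ae_of_all _ fun θ _ => by
      have h := hb (j * α + β) (by positivity) θ
      have e : (1 - r) ^ (-β) * (μ * (1 - r) ^ (-α)) ^ j =
          μ ^ j * (1 - r) ^ (-(j * α + β)) := by
        rw [mul_pow, ← Real.rpow_mul_natCast h1r.le, mul_left_comm, ← Real.rpow_add h1r]
        congr 2
        ring
      rw [mul_assoc, e, norm_mul, norm_mul, norm_pow, norm_pow, norm_inv, norm_circleMap_zero,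
        abs_of_pos hr0, norm_real, Real.norm_eq_abs, abs_neg, abs_of_pos hμ, ← ofReal_neg,
        norm_cpow_real]
      gcongr)
    (ae_of_all _ fun _ _ => hsum)
    intervalIntegrable_const
    (ae_of_all _ fun θ _ => (hasSum_genFun (hball θ)
      (lt_of_le_of_lt (mul_le_mul_of_nonneg_left (hb α hα0.le θ) hμ.le) hr) hμ).mul_left _)
  convert! key.mul_left (2 * π : ℂ)⁻¹ using 1
  funext j
  rw [ofReal_mul, ← integral_one_sub_cpow (by positivity) hr0 hr1, mul_left_comm,
    ← intervalIntegral.integral_const_mul]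
  congr 2
  funext θ
  push_cast
  ring

/-- The Mittag-Leffler series sums to the `n`-th Fourier coefficient of the boundary values of
`genFun α β μ`, by letting the radius in Cauchy's formula tend to `1`. -/
lemma hasSum_boundary_integral {α β μ : ℝ} (hα0 : 0 < α) (hα2 : α ≤ 2) (hβ : 0 < β)
    (hαβ : -1 < α - β) (hμ : 0 < μ) (hμ1 : μ < 1) (n : ℕ) :
    HasSum (fun j : ℕ => (((-μ) ^ j * (Real.Gamma (n + (j * α + β)) /
        (Real.Gamma (n + 1) * Real.Gamma (j * α + β))) : ℝ) : ℂ))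
      ((2 * π : ℂ)⁻¹ * ∫ θ in (0 : ℝ)..2 * π,
        (circleMap 0 1 θ)⁻¹ ^ n * genFun α β μ (circleMap 0 1 θ)) := by
  have hdiff := differentiableOn_genFun β hα0 hα2 hμ
  obtain ⟨m, hm, hmle⟩ := exists_lower_bound hα0 hα2 hμ
  -- a radius so small that the geometric series converges on the whole circle
  obtain ⟨r₀, hr0, hr1, hr⟩ : ∃ r : ℝ, 0 < r ∧ r < 1 ∧ μ * (1 - r) ^ (-α) < 1 := by
    have hc : ContinuousAt (fun r : ℝ => μ * (1 - r) ^ (-α)) 0 := by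
      refine continuousAt_const.mul (ContinuousAt.rpow_const (by fun_prop) (Or.inl (by norm_num)))
    have h1 : ∀ᶠ r in 𝓝[>] (0 : ℝ), μ * (1 - r) ^ (-α) < 1 :=
      nhdsWithin_le_nhds (hc.eventually_lt_const (by simpa using hμ1))
    obtain ⟨r, h, h'⟩ := (h1.and (Ioo_mem_nhdsGT (zero_lt_one (α := ℝ)))).exists
    exact ⟨r, h'.1, h'.2, h⟩
  obtain ⟨p, hp⟩ := hdiff.analyticAt (ball_mem_nhds (0 : ℂ) one_pos)
  have hconst : ∀ r : ℝ, 0 < r → r < 1 → (2 * π : ℂ)⁻¹ * ∫ θ in (0 : ℝ)..2 * π,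
        (circleMap 0 r θ)⁻¹ ^ n * genFun α β μ (circleMap 0 r θ) = p n (fun _ => 1) := by
    intro r h0 h1
    rw [← cauchy_coeff_eq _ h0.ne', cauchy_coeff_of_hasFPowerSeriesAt hdiff h0 h1 hp]
  have hsum := hasSum_integral_genFun hα0 hβ hμ hr0 hr1 hr n
  rw [hconst r₀ hr0 hr1] at hsum
  have hev : ∀ᶠ r in 𝓝[<] (1 : ℝ), r ∈ Set.Ioo (1 / 2 : ℝ) 1 :=
    Ioo_mem_nhdsLT (by norm_num)
  -- the integrals do not depend on `r`, so their limit at `r = 1` is the coefficient itself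
  have hlim : Tendsto (fun r : ℝ => ∫ θ in (0 : ℝ)..2 * π,
        (circleMap 0 r θ)⁻¹ ^ n * genFun α β μ (circleMap 0 r θ)) (𝓝[<] 1)
      (𝓝 (∫ θ in (0 : ℝ)..2 * π,
        (circleMap 0 1 θ)⁻¹ ^ n * genFun α β μ (circleMap 0 1 θ))) := by
    have hae : ∀ᵐ θ : ℝ, θ ∈ Set.uIoc 0 (2 * π) → 0 < θ ∧ θ < 2 * π := by
      filter_upwards [Measure.ae_ne volume (2 * π)] with θ hθ hmem
      rw [Set.uIoc_of_le (by positivity)] at hmem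
      exact ⟨hmem.1, lt_of_le_of_ne hmem.2 hθ⟩
    refine intervalIntegral.tendsto_integral_filter_of_dominated_convergence
      (fun θ => 2 ^ n * m⁻¹ * ((θ / π) ^ (α - β) + ((2 * π - θ) / π) ^ (α - β) + 2 ^ (α - β)))
      (Eventually.of_forall fun r => ?_) ?_ ((bound_integrable hαβ).const_mul _) ?_
    · have h1 := (continuous_circleMap 0 r).measurable
      have h2 := measurable_genFun α β μ
      exact Measurable.aestronglyMeasurable (by fun_prop)
    · filter_upwards [hev] with r hr
      filter_upwards [hae] with θ hθ hmem
      obtain ⟨h0, h1⟩ := hθ hmem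
      have hrpos : 0 < r := by linarith [hr.1]
      rw [norm_mul, norm_pow, norm_inv, norm_circleMap_zero, abs_of_pos hrpos, genFun, norm_div,
        norm_cpow_real, mul_assoc, div_eq_inv_mul]
      have hr2 : r⁻¹ ≤ 2 := by
        rw [inv_le_comm₀ hrpos two_pos]; linarith [hr.1]
      have h3 := hmle (circleMap 0 r θ) (by simpa [abs_of_pos hrpos] using hr.2.le)
      have h4 := norm_rpow_le (p := α - β) hrpos.le hr.2.le h0 h1
      gcongr
    · filter_upwards [hae] with θ hθ hmem
      obtain ⟨h0, h1⟩ := hθ hmem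
      have hpos : 0 < (1 - circleMap 0 1 θ).re := by
        have : Real.cos θ < 1 := by
          refine lt_of_le_of_ne (Real.cos_le_one θ) fun h => ?_
          rw [Real.cos_eq_one_iff_of_lt_of_lt (by linarith) h1] at h
          exact h0.ne' h
        simpa [circleMap, ← ofReal_cos, ← ofReal_sin, exp_mul_I] using this
      have hslit : 1 - circleMap 0 1 θ ∈ slitPlane := Or.inl hpos
      have hc : ContinuousAt (fun r : ℝ => circleMap 0 r θ) 1 := by
        unfold circleMap; fun_prop
      have hne : circleMap 0 1 θ ≠ 0 := circleMap_ne_center one_ne_zero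
      have hd := cpow_add_ne_zero hα0 hα2 hμ (z := circleMap 0 1 θ) (by simp)
      have hcp : ∀ c : ℂ, ContinuousAt (fun r : ℝ => (1 - circleMap 0 r θ) ^ c) 1 := fun c =>
        (continuousAt_const.sub hc).cpow continuousAt_const hslit
      refine Tendsto.mono_left ?_ nhdsWithin_le_nhds
      refine ContinuousAt.tendsto (f := fun r : ℝ =>
        (circleMap 0 r θ)⁻¹ ^ n * genFun α β μ (circleMap 0 r θ)) ?_
      exact ((hc.inv₀ hne).pow n).mul
        ((hcp _).div ((hcp _).add continuousAt_const) hd)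
  have hlim2 := hlim.const_mul (2 * π : ℂ)⁻¹
  have hev' : ∀ᶠ r in 𝓝[<] (1 : ℝ), (2 * π : ℂ)⁻¹ * ∫ θ in (0 : ℝ)..2 * π,
        (circleMap 0 r θ)⁻¹ ^ n * genFun α β μ (circleMap 0 r θ) = p n (fun _ => 1) := by
    filter_upwards [hev] with r hr using hconst r (by linarith [hr.1]) hr.2
  rw [tendsto_nhds_unique (hlim2.congr' hev') tendsto_const_nhds]
  exact hsum

/-! ### Decay of the coefficients -/

/-- Riemann-Lebesgue for Fourier coefficients on `[0, 2π]`. No integrability of `g` is needed,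
since the integrals of a non-integrable `g` are `0` by convention. -/
lemma tendsto_fourier_coeff (g : ℝ → ℂ) :
    Tendsto (fun n : ℕ => ∫ θ in (0 : ℝ)..2 * π, (circleMap 0 1 θ)⁻¹ ^ n * g θ) atTop (𝓝 0) := by
  have hpi := Real.pi_pos
  have h := Real.tendsto_integral_exp_smul_cocompact
    ((Set.Ioc 0 (2 * π)).indicator g)
  have ht : Tendsto (fun n : ℕ => (n : ℝ) / (2 * π)) atTop (cocompact ℝ) :=
    ((tendsto_natCast_atTop_atTop (R := ℝ)).atTop_div_const (by positivity)).mono_right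
      atTop_le_cocompact
  refine (h.comp ht).congr fun n => ?_
  rw [intervalIntegral.integral_of_le (by positivity), ← integral_indicator measurableSet_Ioc]
  refine integral_congr_ae (ae_of_all _ fun θ => ?_)
  by_cases hθ : θ ∈ Set.Ioc 0 (2 * π)
  · simp only [Set.indicator_of_mem hθ, Circle.smul_def, Real.fourierChar_apply, smul_eq_mul]
    congr 1
    rw [circleMap_zero, ofReal_one, one_mul, ← Complex.exp_neg, ← Complex.exp_nat_mul]
    congr 1
    have hpi' : (π : ℂ) ≠ 0 := by exact_mod_cast hpi.ne'
    push_cast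
    field_simp
  · simp [Set.indicator_of_notMem hθ]

lemma tendsto_discML (a : ℤ) {α β lam : ℝ} (hα0 : 0 < α) (hα2 : α ≤ 2) (hβ : 0 < β)
    (hαβ : -1 < α - β) (hlam0 : -1 < lam) (hlam1 : lam < 0) :
    Tendsto (fun k : ℕ => discML α β lam (a + 1 + k) a) atTop (𝓝 0) := by
  have h := (tendsto_fourier_coeff fun θ => genFun α β (-lam) (circleMap 0 1 θ)).const_mul
    (2 * π : ℂ)⁻¹
  rw [mul_zero] at h
  have h2 := (Complex.continuous_re.tendsto 0).comp h
  rw [zero_re] at h2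
  refine h2.congr fun n => ?_
  have hs := hasSum_boundary_integral hα0 hα2 hβ hαβ (neg_pos.mpr hlam1) (by linarith) n
  have hs' := hasSum_re hs
  simp only [ofReal_re, neg_neg] at hs'
  rw [Function.comp_apply, ← hs'.tsum_eq, discML]
  refine tsum_congr fun j => ?_
  rw [rise, show a + 1 + (n : ℤ) - a = (n : ℤ) + 1 by ring]
  push_cast
  rw [show (n : ℝ) + 1 + (j * α + β - 1) = n + (j * α + β) by ring]
  ring

/-- for `1 < α ≤ 2` and `-1 < λ < 0`, both `F_{α,1}(λ,k,a) → 0` and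
`F_{α,2}(λ,k,a) → 0` as `k → ∞`; hence the zero-input response
`y(k) = b₀ F_{α,1}(λ,k,a) + b₁ F_{α,2}(λ,k,a)` converges to `0` for any `b₀, b₁`. -/
theorem discML_convergent_order_in_one_two (a : ℤ) (α : ℝ) (hα0 : 1 < α) (hα1 : α ≤ 2)
    (lam : ℝ) (hlam0 : -1 < lam) (hlam1 : lam < 0) :
    Filter.Tendsto (fun k : ℕ => discML α 1 lam (a + 1 + k) a) Filter.atTop (nhds 0) ∧
    Filter.Tendsto (fun k : ℕ => discML α 2 lam (a + 1 + k) a) Filter.atTop (nhds 0) ∧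
    ∀ b₀ b₁ : ℝ,
      Filter.Tendsto
        (fun k : ℕ => b₀ * discML α 1 lam (a + 1 + k) a + b₁ * discML α 2 lam (a + 1 + k) a)
        Filter.atTop (nhds 0) := by
  have h1 := tendsto_discML a (β := 1) (by linarith) hα1 one_pos (by linarith) hlam0 hlam1
  have h2 := tendsto_discML a (β := 2) (by linarith) hα1 two_pos (by linarith) hlam0 hlam1
  refine ⟨h1, h2, fun b₀ b₁ => ?_⟩
  simpa using (h1.const_mul b₀).add (h2.const_mul b₁)
end

section
/- Let a ∈ ℤ, let 1 < α < 2, and let λ be a real number with -1 < λ < 0. Then the function k ↦ F_{α,1}(λ,k,a) changes sign: it is not the case that F_{α,1}(λ,k,a) > 0 for all k ∈ ℕ_{a+1}; in fact there exists k ∈ ℕ_{a+1} with F_{α,1}(λ,k,a) < 0 (while F_{α,1}(λ,a+1,a) = 1/(1-λ) > 0). -/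
/-- The coefficient `x (x + 1) ⋯ (x + n - 1) / n!` of `z^n` in `(1 - z)^(-x)`. -/
noncomputable def risingCoeff (x : ℝ) : ℕ → ℝ
  | 0 => 1
  | n + 1 => risingCoeff x n * (x + n) / (n + 1)

theorem risingCoeff_succ_mul (x : ℝ) (n : ℕ) :
    ((n : ℝ) + 1) * risingCoeff x (n + 1) = (x + n) * risingCoeff x n := by
  have : (n : ℝ) + 1 ≠ 0 := by positivity
  rw [risingCoeff]
  field_simp

/-- The Chu–Vandermonde identity.  Both sides `S n` satisfy the recursion
`(n + 1) S (n + 1) = (x + y + n) S n`. -/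
theorem risingCoeff_add (x y : ℝ) (n : ℕ) :
    risingCoeff (x + y) n =
      ∑ p ∈ Finset.HasAntidiagonal.antidiagonal n, risingCoeff x p.1 * risingCoeff y p.2 := by
  induction n with
  | zero => simp [risingCoeff]
  | succ n ih =>
    have hn : (n : ℝ) + 1 ≠ 0 := by positivity
    apply mul_left_cancel₀ hn
    rw [risingCoeff_succ_mul, ih]
    -- The weight `n + 1` splits as `p.1 + p.2` on the antidiagonal of `n + 1`.
    have hsplit : ((n : ℝ) + 1) * ∑ p ∈ Finset.HasAntidiagonal.antidiagonal (n + 1),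
          risingCoeff x p.1 * risingCoeff y p.2 =
        (∑ p ∈ Finset.HasAntidiagonal.antidiagonal (n + 1),
          (p.1 : ℝ) * risingCoeff x p.1 * risingCoeff y p.2) +
        ∑ p ∈ Finset.HasAntidiagonal.antidiagonal (n + 1),
          (p.2 : ℝ) * risingCoeff y p.2 * risingCoeff x p.1 := by
      rw [Finset.mul_sum, ← Finset.sum_add_distrib]
      refine Finset.sum_congr rfl fun p hp => ?_
      have h : (p.1 : ℝ) + p.2 = n + 1 := by
        exact_mod_cast Finset.HasAntidiagonal.mem_antidiagonal.mp hp
      rw [← h]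
      ring
    rw [hsplit, Finset.Nat.sum_antidiagonal_succ, Finset.Nat.sum_antidiagonal_succ']
    simp only [Nat.cast_zero, zero_mul, zero_add, Nat.cast_add, Nat.cast_one,
      risingCoeff_succ_mul]
    rw [Finset.mul_sum, ← Finset.sum_add_distrib]
    refine Finset.sum_congr rfl fun p hp => ?_
    have h : (p.1 : ℝ) + p.2 = n := by
      exact_mod_cast Finset.HasAntidiagonal.mem_antidiagonal.mp hp
    rw [← h]
    ring

theorem risingCoeff_pos {x : ℝ} (hx : 0 < x) (n : ℕ) : 0 < risingCoeff x n := by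
  induction n with
  | zero => simp [risingCoeff]
  | succ n ih => rw [risingCoeff]; positivity

theorem one_add_harmonic_le_risingCoeff {α : ℝ} (hα : 1 < α) (n : ℕ) :
    1 + (α - 1) * ∑ i ∈ Finset.range n, 1 / ((i : ℝ) + 1) ≤ risingCoeff α n := by
  induction n with
  | zero => simp [risingCoeff]
  | succ n ih =>
    have hn : (0 : ℝ) < (n : ℝ) + 1 := by positivity
    have hsum : 0 ≤ ∑ i ∈ Finset.range n, 1 / ((i : ℝ) + 1) :=
      Finset.sum_nonneg fun i _ => by positivity
    have hone : 1 ≤ risingCoeff α n := by nlinarith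
    have hrec : risingCoeff α (n + 1) =
        risingCoeff α n + risingCoeff α n * ((α - 1) * (1 / ((n : ℝ) + 1))) := by
      rw [risingCoeff]
      field_simp
      ring
    have hinc : 0 ≤ (α - 1) * (1 / ((n : ℝ) + 1)) :=
      mul_nonneg (by linarith) (by positivity)
    rw [Finset.sum_range_succ, hrec]
    nlinarith

theorem exists_lt_risingCoeff {α : ℝ} (hα : 1 < α) (B : ℝ) : ∃ n, B < risingCoeff α n := by
  obtain ⟨n, hn⟩ :=
    (Real.tendsto_sum_range_one_div_nat_succ_atTop.eventually_gt_atTop (B / (α - 1))).exists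
  refine ⟨n, ?_⟩
  have h := one_add_harmonic_le_risingCoeff hα n
  rw [div_lt_iff₀ (by linarith)] at hn
  linarith

theorem Gamma_quotient_eq_risingCoeff {x : ℝ} (hx : 0 < x) (n : ℕ) :
    Real.Gamma (x + n) / Real.Gamma (n + 1) / Real.Gamma x = risingCoeff x n := by
  have hGx := (Real.Gamma_pos_of_pos hx).ne'
  induction n with
  | zero => simp [risingCoeff, hGx]
  | succ n ih =>
    have hn : (n : ℝ) + 1 ≠ 0 := by positivity
    have hxn : x + (n : ℝ) ≠ 0 := by positivity
    have hGn : Real.Gamma ((n : ℝ) + 1) ≠ 0 := (Real.Gamma_pos_of_pos (by positivity)).ne'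
    rw [risingCoeff, ← ih]
    push_cast
    rw [← add_assoc, Real.Gamma_add_one hxn, Real.Gamma_add_one hn]
    field_simp

/-- The extra factor `j ^ p` makes the induction on `n` close: passing from `n` to `n + 1`
multiplies the summand by an affine function of `j`. -/
theorem summable_pow_mul_risingCoeff (α lam : ℝ) (hlam : |lam| < 1) (n p : ℕ) :
    Summable fun j : ℕ => (j : ℝ) ^ p * (lam ^ j * risingCoeff (j * α + 1) n) := by
  induction n generalizing p with
  | zero =>
    simpa [risingCoeff] using
      summable_pow_mul_geometric_of_norm_lt_one (R := ℝ) p (r := lam) (by simpa using hlam)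
  | succ n ih =>
    have h := ((ih (p + 1)).mul_left (α / (n + 1))).add (ih p)
    refine h.congr fun j => ?_
    have hn : (n : ℝ) + 1 ≠ 0 := by positivity
    rw [risingCoeff]
    field_simp
    ring

theorem summable_risingCoeff (α lam : ℝ) (hlam : |lam| < 1) (n : ℕ) :
    Summable fun j : ℕ => lam ^ j * risingCoeff (j * α + 1) n := by
  simpa using summable_pow_mul_risingCoeff α lam hlam n 0

/-- The value `F_{α,1}(λ, a + 1 + n, a)`, which does not depend on `a`. -/
noncomputable def discMLSeq (α lam : ℝ) (n : ℕ) : ℝ :=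
  ∑' j : ℕ, lam ^ j * risingCoeff (j * α + 1) n

theorem discML_eq_discMLSeq {α : ℝ} (hα : 0 < α) (lam : ℝ) (a : ℤ) (n : ℕ) :
    discML α 1 lam (a + 1 + n) a = discMLSeq α lam n := by
  refine tsum_congr fun j => ?_
  have hx : (0 : ℝ) < j * α + 1 := by positivity
  have hk : (((a + 1 + n - a : ℤ)) : ℝ) = n + 1 := by push_cast; ring
  have harg : (n : ℝ) + 1 + (j * α + 1 - 1) = j * α + 1 + n := by ring
  rw [← Gamma_quotient_eq_risingCoeff hx n, rise, hk, harg, mul_div_assoc]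

theorem discMLSeq_zero (α lam : ℝ) (hlam : |lam| < 1) :
    discMLSeq α lam 0 = 1 / (1 - lam) := by
  simp [discMLSeq, risingCoeff, tsum_geometric_of_abs_lt_one hlam]

/-- The Volterra equation for `discMLSeq`: the coefficient form of the generating function
identity `G(z) = (1 - z)⁻¹ + λ (1 - z)^(-α) G(z)`. -/
theorem discMLSeq_eq (α lam : ℝ) (hlam : |lam| < 1) (n : ℕ) :
    discMLSeq α lam n =
      1 + lam * ∑ p ∈ Finset.HasAntidiagonal.antidiagonal n, risingCoeff α p.1 * discMLSeq α lam p.2 := by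
  have hone : risingCoeff 1 n = 1 := by
    induction n with
    | zero => rfl
    | succ n ih =>
      have hn : (n : ℝ) + 1 ≠ 0 := by positivity
      rw [risingCoeff, ih]
      field_simp
      ring
  have hterm : ∀ j : ℕ, lam ^ (j + 1) * risingCoeff (((j + 1 : ℕ) : ℝ) * α + 1) n =
      lam * ∑ p ∈ Finset.HasAntidiagonal.antidiagonal n,
        risingCoeff α p.1 * (lam ^ j * risingCoeff (j * α + 1) p.2) := by
    intro j
    have harg : ((j + 1 : ℕ) : ℝ) * α + 1 = α + (j * α + 1) := by push_cast; ring
    rw [harg, risingCoeff_add, Finset.mul_sum, Finset.mul_sum]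
    exact Finset.sum_congr rfl fun p _ => by ring
  have hsum := fun p : ℕ × ℕ =>
    (summable_risingCoeff α lam hlam p.2).mul_left (risingCoeff α p.1)
  rw [discMLSeq, (summable_risingCoeff α lam hlam n).tsum_eq_zero_add]
  simp only [hterm]
  rw [tsum_mul_left, Summable.tsum_finsetSum fun p _ => hsum p]
  simp [hone, tsum_mul_left, discMLSeq]

theorem exists_discMLSeq_neg {α lam : ℝ} (hα : 1 < α) (hlam0 : -1 < lam) (hlam1 : lam < 0) :
    ∃ n, discMLSeq α lam n < 0 := by
  by_contra! hnonneg
  have hlam : |lam| < 1 := abs_lt.mpr ⟨hlam0, by linarith⟩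
  have hzero : 0 < discMLSeq α lam 0 := by
    rw [discMLSeq_zero α lam hlam]
    exact one_div_pos.mpr (by linarith)
  obtain ⟨n, hn⟩ := exists_lt_risingCoeff hα (1 / (-lam * discMLSeq α lam 0))
  rw [div_lt_iff₀ (mul_pos (by linarith) hzero)] at hn
  have hle : risingCoeff α n * discMLSeq α lam 0 ≤
      ∑ p ∈ Finset.HasAntidiagonal.antidiagonal n, risingCoeff α p.1 * discMLSeq α lam p.2 :=
    Finset.single_le_sum
      (f := fun p : ℕ × ℕ => risingCoeff α p.1 * discMLSeq α lam p.2)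
      (fun p _ => mul_nonneg (risingCoeff_pos (by linarith) p.1).le (hnonneg p.2))
      (by simp : ((n, 0) : ℕ × ℕ) ∈ Finset.HasAntidiagonal.antidiagonal n)
  have heq := discMLSeq_eq α lam hlam n
  have hmul := mul_le_mul_of_nonpos_left hle hlam1.le
  have := hnonneg n
  linarith

/-- for `1 < α < 2` and `-1 < λ < 0`, the function
`k ↦ F_{α,1}(λ,k,a)` changes sign on `ℕ_{a+1}`: it is not always positive, and
indeed it takes a negative value, while `F_{α,1}(λ,a+1,a) = 1/(1-λ) > 0`. -/
theorem discML_sign_change (a : ℤ) (α : ℝ) (hα0 : 1 < α) (hα1 : α < 2)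
    (lam : ℝ) (hlam0 : -1 < lam) (hlam1 : lam < 0) :
    ¬ (∀ k : ℤ, a + 1 ≤ k → 0 < discML α 1 lam k a) ∧
    (∃ k : ℤ, a + 1 ≤ k ∧ discML α 1 lam k a < 0) ∧
    discML α 1 lam (a + 1) a = 1 / (1 - lam) ∧
    0 < discML α 1 lam (a + 1) a := by
  have hneg : ∃ k : ℤ, a + 1 ≤ k ∧ discML α 1 lam k a < 0 := by
    obtain ⟨n, hn⟩ := exists_discMLSeq_neg hα0 hlam0 hlam1
    exact ⟨a + 1 + n, by omega, by rwa [discML_eq_discMLSeq (by linarith)]⟩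
  have hval : discML α 1 lam (a + 1) a = 1 / (1 - lam) := by
    have h := discML_eq_discMLSeq (α := α) (by linarith) lam a 0
    rw [discMLSeq_zero α lam (abs_lt.mpr ⟨hlam0, by linarith⟩)] at h
    simpa using h
  refine ⟨fun hpos => ?_, hneg, hval, ?_⟩
  · obtain ⟨k, hk, hlt⟩ := hneg
    exact lt_asymm hlt (hpos k hk)
  · rw [hval]
    exact one_div_pos.mpr (by linarith)
end
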